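/- arXiv:math/0602337 — 4 statements merged into one kernel-verified Lean document; each statement's English description precedes it below -/
import Mathlib

section
/- Let u(y,t) = ∫_{ℝⁿ} K(y,z,t) u₀(z) dz, where K is the Euclidean heat kernel on ℝⁿ and u₀ : ℝⁿ → ℝ is continuous, compactly supported, nonnegative, and not identically zero, and set A = sup u₀. Then for every y ∈ ℝⁿ and every t ∈ (0,1], one has t ‖∇u(y,t)‖² / u(y,t)² ≤ (1+t) log( A / u(y,t) ). -/
open Real MeasureTheory Filter Set

/-- The Euclidean heat kernel on ℝⁿ. -/
noncomputable def heatK (n : ℕ) (x y : EuclideanSpace ℝ (Fin n)) (t : ℝ) : ℝ :=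
  (4 * π * t) ^ (-(n : ℝ) / 2) * Real.exp (-‖x - y‖ ^ 2 / (4 * t))

lemma aux_int (n : ℕ) (y : EuclideanSpace ℝ (Fin n)) (t : ℝ) (ht : 0 < t) :
    ∫ z, heatK n y z t = 1 := by
  unfold heatK
  rw [integral_const_mul]
  have h1 : ∫ z : EuclideanSpace ℝ (Fin n), Real.exp (-‖y - z‖ ^ 2 / (4 * t))
      = ∫ z : EuclideanSpace ℝ (Fin n), Real.exp (-(1 / (4 * t)) * ‖z‖ ^ 2) := by
    rw [← integral_sub_left_eq_self
      (fun z : EuclideanSpace ℝ (Fin n) => Real.exp (-(1 / (4 * t)) * ‖z‖ ^ 2)) volume y]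
    congr 1
    ext z
    congr 1
    ring
  rw [h1, GaussianFourier.integral_rexp_neg_mul_sq_norm (by positivity)]
  rw [finrank_euclideanSpace_fin]
  have h2 : π / (1 / (4 * t)) = 4 * π * t := by field_simp
  rw [h2, ← Real.rpow_add (by positivity)]
  ring_nf
  simp

lemma aux_cont (n : ℕ) (y : EuclideanSpace ℝ (Fin n)) (t : ℝ) :
    Continuous (fun z => heatK n y z t) := by
  unfold heatK
  fun_prop

lemma aux_pos (n : ℕ) (y z : EuclideanSpace ℝ (Fin n)) (t : ℝ) (ht : 0 < t) :
    0 < heatK n y z t := by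
  unfold heatK
  positivity

lemma aux_sq (n : ℕ) (y z w : EuclideanSpace ℝ (Fin n)) (t : ℝ) (ht : 0 < t) (s : ℝ) :
    heatK n y z t * Real.exp (s * inner ℝ (z - y) w)
      = Real.exp (s ^ 2 * t * ‖w‖ ^ 2) * heatK n (y + s • ((2 * t) • w)) z t := by
  unfold heatK
  have h : ‖y + s • ((2 * t) • w) - z‖ ^ 2
      = ‖y - z‖ ^ 2 - 4 * t * s * inner ℝ (z - y) w + (2 * t * s) ^ 2 * ‖w‖ ^ 2 := by
    have : y + s • ((2 * t) • w) - z = (y - z) + (2 * t * s) • w := by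
      rw [smul_smul, mul_comm s]; abel
    rw [this, norm_add_sq_real, inner_smul_right, norm_smul, mul_pow, Real.norm_eq_abs, sq_abs,
      ← neg_sub y z, inner_neg_left]
    ring
  rw [h, mul_assoc, ← Real.exp_add, mul_left_comm, ← Real.exp_add]
  congr 2
  field_simp
  ring

/-- Flat-space Hamilton-type gradient estimate (Lemma 2(i) of the paper with
`k₁ = k₂ = 0`): for the bounded positive solution `u` of the heat equation with
initial data `u₀` and `A = sup u₀`, one has
`t ‖∇u‖²/u² ≤ (1+t) log(A/u)` for `0 < t ≤ 1`. -/
theorem stmt2 (n : ℕ) (hn : 1 ≤ n)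
    (u₀ : EuclideanSpace ℝ (Fin n) → ℝ) (hc : Continuous u₀)
    (hsupp : HasCompactSupport u₀) (hnn : ∀ z, 0 ≤ u₀ z) (hne : ∃ z, u₀ z ≠ 0)
    (u : EuclideanSpace ℝ (Fin n) → ℝ → ℝ)
    (hu : ∀ y t, u y t = ∫ z, heatK n y z t * u₀ z)
    (A : ℝ) (hA : A = sSup (Set.range u₀)) :
    ∀ (y : EuclideanSpace ℝ (Fin n)), ∀ t ∈ Set.Ioc (0 : ℝ) 1,
      t * ‖gradient (fun z => u z t) y‖ ^ 2 / (u y t) ^ 2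
        ≤ (1 + t) * Real.log (A / u y t) := by
  rintro y t ⟨ht, -⟩
  have hbdd : BddAbove (Set.range u₀) := hc.bddAbove_range_of_hasCompactSupport hsupp
  have huA : ∀ z, u₀ z ≤ A := fun z => hA ▸ le_csSup hbdd ⟨z, rfl⟩
  have hint : ∀ g : EuclideanSpace ℝ (Fin n) → ℝ, Continuous g →
      Integrable (fun z => g z * u₀ z) := fun g hg =>
    (hg.mul hc).integrable_of_hasCompactSupport hsupp.mul_left
  have hle : ∀ x, u x t ≤ A := by
    intro x
    have hK : Integrable (fun z => heatK n x z t) := by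
      by_contra h
      have := aux_int n x t ht
      rw [integral_undef h] at this
      norm_num at this
    calc u x t = ∫ z, heatK n x z t * u₀ z := hu x t
      _ ≤ ∫ z, heatK n x z t * A := by
        apply integral_mono (hint _ (aux_cont n x t)) (hK.mul_const A)
        intro z
        exact mul_le_mul_of_nonneg_left (huA z) (aux_pos n x z t ht).le
      _ = A := by rw [integral_mul_const, aux_int n x t ht, one_mul]
  have hpos : 0 < u y t := by
    rw [hu]
    obtain ⟨z₀, hz₀⟩ := hne
    apply ((aux_cont n y t).mul hc).integral_pos_of_hasCompactSupport_nonneg_nonzero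
      hsupp.mul_left (x := z₀)
    · intro z
      exact mul_nonneg (aux_pos n y z t ht).le (hnn z)
    · exact mul_ne_zero (aux_pos n y z₀ t ht).ne' hz₀
  have hApos : 0 < A := hpos.trans_le (hle y)
  have hlog : 0 ≤ Real.log (A / u y t) := Real.log_nonneg ((one_le_div hpos).2 (hle y))
  by_cases hd : DifferentiableAt ℝ (fun z => u z t) y
  swap
  · rw [gradient_eq_zero_of_not_differentiableAt hd]
    simp only [norm_zero]
    have : 0 ≤ (1 + t) * Real.log (A / u y t) := by positivity
    simpa using this
  set G := gradient (fun z => u z t) y with hG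
  set w := (u y t)⁻¹ • G with hw
  have hGw : G = u y t • w := by rw [hw, smul_smul, mul_inv_cancel₀ hpos.ne', one_smul]
  set m := 2 * t * ‖w‖ ^ 2 with hm
  let ψ : ℝ → ℝ := fun s => ∫ z, heatK n y z t * Real.exp (s * (inner ℝ (z - y) w - m)) * u₀ z
  have hψ : ∀ s, ψ s = Real.exp (s ^ 2 * t * ‖w‖ ^ 2 - s * m) * u (y + s • ((2 * t) • w)) t := by
    intro s
    rw [hu, ← integral_const_mul]
    apply integral_congr_ae
    filter_upwards with z
    have := aux_sq n y z w t ht s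
    rw [mul_sub, Real.exp_sub, Real.exp_sub]
    linear_combination (u₀ z / Real.exp (s * m)) * this
  have hconv : ConvexOn ℝ univ ψ := by
    refine ⟨convex_univ, fun a _ b _ p q hp hq hpq => ?_⟩
    have hi : ∀ s : ℝ, Integrable (fun z => heatK n y z t * Real.exp (s * (inner ℝ (z - y) w - m)) * u₀ z) :=
      fun s => hint _ ((aux_cont n y t).mul (by fun_prop))
    simp only [ψ, smul_eq_mul]
    rw [← integral_const_mul, ← integral_const_mul,
      ← integral_add ((hi a).const_mul p) ((hi b).const_mul q)]
    apply integral_mono (hi _) (((hi a).const_mul p).add ((hi b).const_mul q))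
    intro z
    have h1 := convexOn_exp.2 (mem_univ (a * (inner ℝ (z - y) w - m)))
      (mem_univ (b * (inner ℝ (z - y) w - m))) hp hq hpq
    simp only [smul_eq_mul] at h1
    have h2 : 0 ≤ heatK n y z t * u₀ z := mul_nonneg (aux_pos n y z t ht).le (hnn z)
    have h3 := mul_le_mul_of_nonneg_left h1 h2
    have h4 : (p * a + q * b) * (inner ℝ (z - y) w - m)
      = p * (a * (inner ℝ (z - y) w - m)) + q * (b * (inner ℝ (z - y) w - m)) := by ring
    simp only [Pi.add_apply]
    rw [h4]
    linarith
  have hder : HasDerivAt ψ 0 0 := by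
    have e : ψ = fun s => Real.exp (s ^ 2 * t * ‖w‖ ^ 2 - s * m) * u (y + s • ((2 * t) • w)) t :=
      funext hψ
    rw [e]
    have h1 : HasDerivAt (fun s : ℝ => Real.exp (s ^ 2 * t * ‖w‖ ^ 2 - s * m)) (-m) 0 := by
      have := ((((hasDerivAt_pow 2 (0:ℝ)).mul_const t).mul_const (‖w‖ ^ 2)).sub
        ((hasDerivAt_id (0:ℝ)).mul_const m)).exp
      refine HasDerivAt.congr_deriv (f := fun s : ℝ => Real.exp (s ^ 2 * t * ‖w‖ ^ 2 - s * m)) this ?_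
      simp
    have h2 : HasDerivAt (fun s : ℝ => y + s • ((2 * t) • w)) ((2 * t) • w) 0 := by
      have := ((hasDerivAt_id (0:ℝ)).smul_const ((2 * t) • w)).const_add y
      simpa using this
    have h3 : HasFDerivAt (fun z => u z t) (InnerProductSpace.toDual ℝ _ G)
        (y + (0:ℝ) • ((2 * t) • w)) := by
      rw [zero_smul, add_zero]
      exact hd.hasGradientAt.hasFDerivAt
    have h4 := h1.mul (h3.comp_hasDerivAt (0:ℝ) h2)
    refine HasDerivAt.congr_deriv
      (f := fun s => Real.exp (s ^ 2 * t * ‖w‖ ^ 2 - s * m) * u (y + s • ((2 * t) • w)) t) h4 ?_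
    simp only [InnerProductSpace.toDual_apply_apply, Function.comp, zero_smul, add_zero]
    rw [hGw, inner_smul_left, inner_smul_right, real_inner_self_eq_norm_sq]
    simp [hm]
    ring
  have h01 : ψ 0 ≤ ψ 1 := by
    have := hconv.le_slope_of_hasDerivAt (mem_univ 0) (mem_univ 1) one_pos hder
    simp [slope_def_field] at this
    linarith
  have hfin : u y t ≤ Real.exp (-(t * ‖w‖ ^ 2)) * A := by
    rw [hψ, hψ] at h01
    have e1 : (1:ℝ) ^ 2 * t * ‖w‖ ^ 2 - 1 * m = -(t * ‖w‖ ^ 2) := by rw [hm]; ring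
    rw [e1] at h01
    simp only [zero_smul, add_zero] at h01
    norm_num at h01
    exact h01.trans (mul_le_mul_of_nonneg_left (hle _) (Real.exp_pos _).le)
  have hmain : t * ‖w‖ ^ 2 ≤ Real.log (A / u y t) := by
    rw [Real.le_log_iff_exp_le (by positivity), le_div_iff₀ hpos]
    have := mul_le_mul_of_nonneg_left hfin (Real.exp_pos (t * ‖w‖ ^ 2)).le
    rwa [← mul_assoc, ← Real.exp_add, add_neg_cancel, Real.exp_zero, one_mul] at this
  have e : t * ‖G‖ ^ 2 / (u y t) ^ 2 = t * ‖w‖ ^ 2 := by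
    rw [hGw, norm_smul, mul_pow, Real.norm_eq_abs, sq_abs]
    field_simp
  rw [e]
  nlinarith
end

section
/- Let u(y,t) = ∫_{ℝⁿ} K(y,z,t) u₀(z) dz, where K is the Euclidean heat kernel on ℝⁿ and u₀ : ℝⁿ → ℝ is continuous, compactly supported, nonnegative, and not identically zero, and set m = ∫_{ℝⁿ} u₀(z) dz. Then for every y ∈ ℝⁿ and every t ∈ (0,1], one has t ‖∇u(y,t)‖² / u(y,t)² ≤ (2+t) log( m / ( (2πt)^{n/2} u(y,t) ) ). -/
open Real MeasureTheory Filter Set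

lemma heatK_cont (n : ℕ) (x : EuclideanSpace ℝ (Fin n)) (t : ℝ) :
    Continuous (fun z => heatK n x z t) := by
  unfold heatK
  fun_prop

lemma heatK_hasFDerivAt (n : ℕ) (x z : EuclideanSpace ℝ (Fin n)) (t : ℝ) (ht : 0 < t) :
    HasFDerivAt (fun x => heatK n x z t)
      ((heatK n x z t / (2 * t)) • innerSL ℝ (z - x)) x := by
  have h1 : HasFDerivAt (fun x : EuclideanSpace ℝ (Fin n) => x - z)
      (ContinuousLinearMap.id ℝ _) x := (hasFDerivAt_id x).sub_const z
  have h2 := ((((h1.norm_sq).neg).mul_const ((4 * t)⁻¹)).exp).const_mul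
    ((4 * π * t) ^ (-(n : ℝ) / 2))
  have h3 : (fun x => heatK n x z t) = fun x => (4 * π * t) ^ (-(n : ℝ) / 2) *
      Real.exp (-‖x - z‖ ^ 2 * (4 * t)⁻¹) := by
    funext x
    simp [heatK, div_eq_mul_inv]
  rw [h3]
  refine h2.congr_fderiv ?_
  ext v
  simp [heatK, div_eq_mul_inv, inner_sub_left]
  field_simp
  ring

lemma heat_fderiv (n : ℕ) (u₀ : EuclideanSpace ℝ (Fin n) → ℝ) (hc : Continuous u₀)
    (hsupp : HasCompactSupport u₀) (hnn : ∀ z, 0 ≤ u₀ z)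
    (y : EuclideanSpace ℝ (Fin n)) (t : ℝ) (ht : 0 < t) :
    HasFDerivAt (fun x => ∫ z, heatK n x z t * u₀ z)
      (∫ z, (heatK n y z t / (2 * t) * u₀ z) • innerSL ℝ (z - y)) y := by
  have hC : 0 ≤ (4 * π * t) ^ (-(n : ℝ) / 2) := by positivity
  refine hasFDerivAt_integral_of_dominated_of_fderiv_le
    (F := fun x z => heatK n x z t * u₀ z)
    (F' := fun x z => (heatK n x z t / (2 * t) * u₀ z) • innerSL ℝ (z - x))
    (bound := fun z => ((4 * π * t) ^ (-(n : ℝ) / 2) / (2 * t) * (1 + ‖z - y‖)) * u₀ z)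
    (Metric.ball_mem_nhds y one_pos) ?_ ?_ ?_ ?_ ?_ ?_
  · exact Eventually.of_forall fun x => ((heatK_cont n x t).mul hc).aestronglyMeasurable
  · exact ((heatK_cont n y t).mul hc).integrable_of_hasCompactSupport hsupp.mul_left
  · have := heatK_cont n y t
    exact Continuous.aestronglyMeasurable (by fun_prop)
  · refine Eventually.of_forall fun z x hx => ?_
    have hK0 : 0 ≤ heatK n x z t := by unfold heatK; positivity
    have hK : heatK n x z t ≤ (4 * π * t) ^ (-(n : ℝ) / 2) := by
      unfold heatK
      refine mul_le_of_le_one_right hC (Real.exp_le_one_iff.2 ?_)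
      apply div_nonpos_of_nonpos_of_nonneg
      · simp
      · positivity
    have h0 := hnn z
    rw [norm_smul, innerSL_apply_norm, Real.norm_of_nonneg (by positivity)]
    have hd : ‖z - x‖ ≤ 1 + ‖z - y‖ := by
      rw [Metric.mem_ball, dist_eq_norm] at hx
      have : z - x = (z - y) - (x - y) := by abel
      rw [this]
      linarith [norm_sub_le (z - y) (x - y)]
    calc heatK n x z t / (2 * t) * u₀ z * ‖z - x‖
        ≤ (4 * π * t) ^ (-(n : ℝ) / 2) / (2 * t) * u₀ z * (1 + ‖z - y‖) := by gcongr
      _ = _ := by ring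
  · refine Continuous.integrable_of_hasCompactSupport (by fun_prop) hsupp.mul_left
  · refine Eventually.of_forall fun z x hx => ?_
    refine ((heatK_hasFDerivAt n x z t ht).mul_const (u₀ z)).congr_fderiv ?_
    rw [smul_smul]
    congr 1
    ring

/-- Flat-space case of Lemma 2(ii) of the paper: for the positive solution `u`
of the heat equation with initial data `u₀` and `m = ∫ u₀`, one has
`t ‖∇u‖²/u² ≤ (2+t) log( m / ((2πt)^{n/2} u) )` for `0 < t ≤ 1`. -/
theorem stmt3 (n : ℕ) (hn : 1 ≤ n)
    (u₀ : EuclideanSpace ℝ (Fin n) → ℝ) (hc : Continuous u₀)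
    (hsupp : HasCompactSupport u₀) (hnn : ∀ z, 0 ≤ u₀ z) (hne : ∃ z, u₀ z ≠ 0)
    (u : EuclideanSpace ℝ (Fin n) → ℝ → ℝ)
    (hu : ∀ y t, u y t = ∫ z, heatK n y z t * u₀ z)
    (m : ℝ) (hm : m = ∫ z, u₀ z) :
    ∀ (y : EuclideanSpace ℝ (Fin n)), ∀ t ∈ Set.Ioc (0 : ℝ) 1,
      t * ‖gradient (fun z => u z t) y‖ ^ 2 / (u y t) ^ 2
        ≤ (2 + t) * Real.log (m / ((2 * π * t) ^ ((n : ℝ) / 2) * u y t)) := by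
  intro y t ⟨ht, ht1⟩
  have hKc := heatK_cont n y t
  have hKpos : ∀ z, 0 < heatK n y z t := fun z => by unfold heatK; positivity
  have hint : Integrable (fun z => heatK n y z t * u₀ z) :=
    (hKc.mul hc).integrable_of_hasCompactSupport hsupp.mul_left
  have hupos : 0 < u y t := by
    rw [hu]
    obtain ⟨z, hz⟩ := hne
    exact (hKc.mul hc).integral_pos_of_hasCompactSupport_nonneg_nonzero hsupp.mul_left
      (fun z => mul_nonneg (hKpos z).le (hnn z)) (x := z) (mul_ne_zero (hKpos z).ne' hz)
  set g := gradient (fun z => u z t) y with hg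
  set G := (u y t)⁻¹ • g with hG
  have hF : Integrable (fun z => (heatK n y z t / (2 * t) * u₀ z) • innerSL ℝ (z - y)) := by
    refine Continuous.integrable_of_hasCompactSupport (by fun_prop) ?_
    exact (hsupp.mul_left).smul_right
  have hFG : Integrable (fun z => heatK n y z t * u₀ z * inner ℝ (z - y) G) := by
    refine Continuous.integrable_of_hasCompactSupport (by fun_prop) ?_
    exact (hsupp.mul_left).mul_right
  have hgG : inner ℝ g G = (∫ z, heatK n y z t * u₀ z * inner ℝ (z - y) G) / (2 * t) := by
    have hd := heat_fderiv n u₀ hc hsupp hnn y t ht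
    have hfe : (fun z => u z t) = fun x => ∫ z, heatK n x z t * u₀ z := by
      funext x; exact hu x t
    rw [hg, gradient, InnerProductSpace.toDual_symm_apply, hfe, hd.fderiv,
      ContinuousLinearMap.integral_apply hF, ← integral_div]
    congr 1
    funext z
    simp only [ContinuousLinearMap.smul_apply, innerSL_apply_apply, smul_eq_mul]
    ring
  have hgu : g = u y t • G := by rw [hG, smul_smul, mul_inv_cancel₀ hupos.ne', one_smul]
  have hI : ∫ z, heatK n y z t * u₀ z * inner ℝ (z - y) G = u y t * (2 * t * ‖G‖ ^ 2) := by
    have h : inner ℝ g G = u y t * ‖G‖ ^ 2 := by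
      rw [hgu, real_inner_smul_left, real_inner_self_eq_norm_sq]
    rw [h, eq_div_iff (by positivity)] at hgG
    rw [← hgG]; ring
  set C := (4 * π * t) ^ (-(n : ℝ) / 2) with hCdef
  have hC : 0 < C := by positivity
  have hpt : ∀ z, heatK n y z t * u₀ z * inner ℝ (z - y) G
      + (1 - 2 * t * ‖G‖ ^ 2) * (heatK n y z t * u₀ z)
      ≤ (C * Real.exp (-(t * ‖G‖ ^ 2))) * u₀ z := by
    intro z
    set b := inner ℝ (z - y) G with hb
    have h1 : b - 2 * t * ‖G‖ ^ 2 + 1 ≤ Real.exp (b - 2 * t * ‖G‖ ^ 2) := Real.add_one_le_exp _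
    have hsq : 0 ≤ ‖y - z‖ ^ 2 - 4 * t * b + 4 * t ^ 2 * ‖G‖ ^ 2 := by
      have h := sq_nonneg ‖(z - y) - (2 * t) • G‖
      rw [norm_sub_sq_real, real_inner_smul_right, norm_smul, mul_pow, norm_sub_rev z y,
        Real.norm_of_nonneg (by positivity)] at h
      rw [← hb] at h
      linarith
    have h2 : heatK n y z t * Real.exp (b - 2 * t * ‖G‖ ^ 2)
        ≤ C * Real.exp (-(t * ‖G‖ ^ 2)) := by
      unfold heatK
      rw [mul_assoc, ← Real.exp_add]
      refine mul_le_mul_of_nonneg_left (Real.exp_le_exp.2 ?_) hC.le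
      have : -‖y - z‖ ^ 2 / (4 * t) + (b - 2 * t * ‖G‖ ^ 2) + t * ‖G‖ ^ 2
        = -(‖y - z‖ ^ 2 - 4 * t * b + 4 * t ^ 2 * ‖G‖ ^ 2) / (4 * t) := by
        field_simp; ring
      have h3 : -(‖y - z‖ ^ 2 - 4 * t * b + 4 * t ^ 2 * ‖G‖ ^ 2) / (4 * t) ≤ 0 :=
        div_nonpos_of_nonpos_of_nonneg (by linarith) (by positivity)
      linarith
    calc _ = heatK n y z t * (b - 2 * t * ‖G‖ ^ 2 + 1) * u₀ z := by ring
      _ ≤ heatK n y z t * Real.exp (b - 2 * t * ‖G‖ ^ 2) * u₀ z :=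
        mul_le_mul_of_nonneg_right (mul_le_mul_of_nonneg_left h1 (hKpos z).le) (hnn z)
      _ ≤ _ := mul_le_mul_of_nonneg_right h2 (hnn z)
  have hint0 : Integrable u₀ := hc.integrable_of_hasCompactSupport hsupp
  have hmain := integral_mono (hFG.add (hint.const_mul (1 - 2 * t * ‖G‖ ^ 2)))
    (hint0.const_mul (C * Real.exp (-(t * ‖G‖ ^ 2)))) hpt
  simp only [Pi.add_apply] at hmain
  rw [integral_add hFG (hint.const_mul _), integral_const_mul, integral_const_mul, hI, ← hu,
    ← hm] at hmain
  have hle : u y t * Real.exp (t * ‖G‖ ^ 2) ≤ C * m := by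
    have h := mul_le_mul_of_nonneg_right hmain (Real.exp_pos (t * ‖G‖ ^ 2)).le
    have he : Real.exp (-(t * ‖G‖ ^ 2)) * Real.exp (t * ‖G‖ ^ 2) = 1 := by
      rw [← Real.exp_add]; simp
    calc _ = (u y t * (2 * t * ‖G‖ ^ 2) + (1 - 2 * t * ‖G‖ ^ 2) * u y t)
          * Real.exp (t * ‖G‖ ^ 2) := by ring
      _ ≤ _ := h
      _ = C * m * (Real.exp (-(t * ‖G‖ ^ 2)) * Real.exp (t * ‖G‖ ^ 2)) := by ring
      _ = _ := by rw [he, mul_one]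
  have hmpos : 0 < m := by
    have : 0 < C * m := lt_of_lt_of_le (by positivity) hle
    exact (mul_pos_iff_of_pos_left hC).1 this
  have hCle : C ≤ ((2 * π * t) ^ ((n : ℝ) / 2))⁻¹ := by
    rw [hCdef, neg_div, Real.rpow_neg (by positivity)]
    apply inv_anti₀ (by positivity)
    apply Real.rpow_le_rpow (by positivity) _ (by positivity)
    have := mul_pos Real.pi_pos ht
    nlinarith
  have hlog : t * ‖G‖ ^ 2 ≤ Real.log (m / ((2 * π * t) ^ ((n : ℝ) / 2) * u y t)) := by
    rw [Real.le_log_iff_exp_le (by positivity), ← div_div, le_div_iff₀ hupos]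
    calc _ = u y t * Real.exp (t * ‖G‖ ^ 2) := by ring
      _ ≤ C * m := hle
      _ ≤ ((2 * π * t) ^ ((n : ℝ) / 2))⁻¹ * m := mul_le_mul_of_nonneg_right hCle hmpos.le
      _ = _ := by rw [mul_comm, ← div_eq_mul_inv]
  have hL : t * ‖g‖ ^ 2 / u y t ^ 2 = t * ‖G‖ ^ 2 := by
    rw [hgu, norm_smul, Real.norm_of_nonneg hupos.le]
    field_simp
  rw [hL]
  have h0 : 0 ≤ t * ‖G‖ ^ 2 := by positivity
  nlinarith
end

section
/- Let u be a smooth positive solution of the heat equation ∂u/∂t = Δu on U × (a,b), where U ⊆ ℝⁿ is open. Then on U × (a,b) one has the identity (∂/∂t - Δ)( ‖∇u‖²/u ) = -(2/u) ‖ ∇²u - (∇u ⊗ ∇u)/u ‖²_F, where ‖·‖_F denotes the Frobenius norm of an n×n matrix; in particular (∂/∂t - Δ)( ‖∇u‖²/u ) ≤ 0. -/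
open Real MeasureTheory Filter Set

/-- `i`-th partial derivative of `f : ℝⁿ → ℝ`. -/
noncomputable def pdv {n : ℕ} (i : Fin n) (f : EuclideanSpace ℝ (Fin n) → ℝ)
    (y : EuclideanSpace ℝ (Fin n)) : ℝ :=
  fderiv ℝ f y (EuclideanSpace.single i 1)

/-- `(i,j)` entry of the Hessian of `f : ℝⁿ → ℝ`. -/
noncomputable def hess {n : ℕ} (i j : Fin n) (f : EuclideanSpace ℝ (Fin n) → ℝ)
    (y : EuclideanSpace ℝ (Fin n)) : ℝ :=
  pdv i (pdv j f) y

/-- Euclidean Laplacian (trace of the Hessian) of `f : ℝⁿ → ℝ`. -/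
noncomputable def lap {n : ℕ} (f : EuclideanSpace ℝ (Fin n) → ℝ)
    (y : EuclideanSpace ℝ (Fin n)) : ℝ :=
  ∑ i, hess i i f y

section aux
variable {V : Type*} [NormedAddCommGroup V] [NormedSpace ℝ V]

/-- directional derivative -/
noncomputable def Dd (v : V) (f : V → ℝ) (p : V) : ℝ := fderiv ℝ f p v

/-- smooth on a set -/
def Sm (W : Set V) (f : V → ℝ) : Prop := ContDiffOn ℝ (⊤ : ℕ∞) f W

theorem Sm.diff {W : Set V} (hW : IsOpen W) {f : V → ℝ} (hf : Sm W f) {p : V} (hp : p ∈ W) :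
    DifferentiableAt ℝ f p :=
  (ContDiffOn.contDiffAt hf (hW.mem_nhds hp)).differentiableAt (by simp)

theorem Sm.D {W : Set V} (hW : IsOpen W) {f : V → ℝ} (hf : Sm W f) (v : V) : Sm W (Dd v f) := by
  have h : ContDiffOn ℝ (⊤ : ℕ∞) (fderiv ℝ f) W :=
    ContDiffOn.fderiv_of_isOpen hf hW (by simp)
  exact h.clm_apply contDiffOn_const

theorem Dd_congr {W : Set V} (hW : IsOpen W) {f g : V → ℝ} (h : ∀ p ∈ W, f p = g p) (v : V)
    {p : V} (hp : p ∈ W) : Dd v f p = Dd v g p := by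
  unfold Dd
  have : f =ᶠ[nhds p] g := Filter.eventuallyEq_of_mem (hW.mem_nhds hp) h
  rw [this.fderiv_eq]

theorem Dd_comm {W : Set V} (hW : IsOpen W) {f : V → ℝ} (hf : Sm W f) (v w : V)
    {p : V} (hp : p ∈ W) : Dd v (Dd w f) p = Dd w (Dd v f) p := by
  have hc : ContDiffAt ℝ (⊤ : ℕ∞) f p := ContDiffOn.contDiffAt hf (hW.mem_nhds hp)
  have hs : IsSymmSndFDerivAt ℝ f p := hc.isSymmSndFDerivAt (by simp; norm_cast)
  have hd : DifferentiableAt ℝ (fderiv ℝ f) p :=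
    ContDiffAt.differentiableAt (n := 1)
      (hc.fderiv_right (m := 1) (by norm_cast)) (by simp)
  have key : ∀ a b : V, Dd a (Dd b f) p = fderiv ℝ (fderiv ℝ f) p a b := by
    intro a b
    unfold Dd
    have := (hd.hasFDerivAt.clm_apply (hasFDerivAt_const b p)).fderiv
    rw [this]; simp
  rw [key, key]
  exact hs v w

theorem Dd_mul {W : Set V} (hW : IsOpen W) {f g : V → ℝ} (hf : Sm W f) (hg : Sm W g) (v : V)
    {p : V} (hp : p ∈ W) : Dd v (fun q => f q * g q) p = Dd v f p * g p + f p * Dd v g p := by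
  unfold Dd
  rw [((hf.diff hW hp).hasFDerivAt.fun_mul (hg.diff hW hp).hasFDerivAt).fderiv]
  simp; ring

theorem Dd_add {W : Set V} (hW : IsOpen W) {f g : V → ℝ} (hf : Sm W f) (hg : Sm W g) (v : V)
    {p : V} (hp : p ∈ W) : Dd v (fun q => f q + g q) p = Dd v f p + Dd v g p := by
  unfold Dd
  rw [((hf.diff hW hp).hasFDerivAt.fun_add (hg.diff hW hp).hasFDerivAt).fderiv]
  simp

theorem Dd_sum {W : Set V} (hW : IsOpen W) {n : ℕ} {f : Fin n → V → ℝ} (hf : ∀ i, Sm W (f i))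
    (v : V) {p : V} (hp : p ∈ W) : Dd v (fun q => ∑ i, f i q) p = ∑ i, Dd v (f i) p := by
  unfold Dd
  rw [(HasFDerivAt.fun_sum (u := Finset.univ)
    (fun i _ => ((hf i).diff hW hp).hasFDerivAt)).fderiv]
  simp

/-- The abstract identity. -/
theorem absId {W : Set V} (hW : IsOpen W) {n : ℕ} (e : Fin n → V) (τ : V) {F : V → ℝ}
    (hF : Sm W F) (hpos : ∀ p ∈ W, 0 < F p)
    (hheat : ∀ p ∈ W, Dd τ F p = ∑ i, Dd (e i) (Dd (e i) F) p)
    {G : V → ℝ} (hG : ∀ p ∈ W, G p = (∑ i, Dd (e i) F p ^ 2) / F p) (hGs : Sm W G)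
    {p : V} (hp : p ∈ W) :
    Dd τ G p - ∑ i, Dd (e i) (Dd (e i) G) p = -(2 / F p) * ∑ i, ∑ j,
      (Dd (e i) (Dd (e j) F) p - Dd (e i) F p * Dd (e j) F p / F p) ^ 2 := by
  have hP : ∀ i, Sm W (Dd (e i) F) := fun i => hF.D hW _
  have hPP : ∀ i, Sm W (fun q => Dd (e i) F q * Dd (e i) F q) := fun i =>
    ContDiffOn.mul (hP i) (hP i)
  have hGF : ∀ q ∈ W, G q * F q = ∑ i, Dd (e i) F q * Dd (e i) F q := by
    intro q hq
    rw [hG q hq, div_mul_cancel₀ _ (hpos q hq).ne']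
    simp [sq]
  have first : ∀ v : V, ∀ q ∈ W, Dd v G q * F q + G q * Dd v F q
      = ∑ i, (Dd v (Dd (e i) F) q * Dd (e i) F q + Dd (e i) F q * Dd v (Dd (e i) F) q) := by
    intro v q hq
    rw [← Dd_mul hW hGs hF v hq, Dd_congr hW hGF v hq, Dd_sum hW hPP v hq]
    exact Finset.sum_congr rfl fun i _ => Dd_mul hW (hP i) (hP i) v hq
  have second : ∀ v : V, (Dd v (Dd v G) p * F p + Dd v G p * Dd v F p)
        + (Dd v G p * Dd v F p + G p * Dd v (Dd v F) p)
      = ∑ i, ((Dd v (Dd v (Dd (e i) F)) p * Dd (e i) F p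
            + Dd v (Dd (e i) F) p * Dd v (Dd (e i) F) p)
          + (Dd v (Dd (e i) F) p * Dd v (Dd (e i) F) p
            + Dd (e i) F p * Dd v (Dd v (Dd (e i) F)) p)) := by
    intro v
    have s1 : ∀ i, Sm W (fun q => Dd v (Dd (e i) F) q * Dd (e i) F q) := fun i =>
      ContDiffOn.mul ((hP i).D hW v) (hP i)
    have s2 : ∀ i, Sm W (fun q => Dd (e i) F q * Dd v (Dd (e i) F) q) := fun i =>
      ContDiffOn.mul (hP i) ((hP i).D hW v)
    have s3 : ∀ i, Sm W (fun q => Dd v (Dd (e i) F) q * Dd (e i) F q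
      + Dd (e i) F q * Dd v (Dd (e i) F) q) := fun i => ContDiffOn.add (s1 i) (s2 i)
    have s4 : Sm W (fun q => Dd v G q * F q) := ContDiffOn.mul (hGs.D hW v) hF
    have s5 : Sm W (fun q => G q * Dd v F q) := ContDiffOn.mul hGs (hF.D hW v)
    rw [← Dd_mul hW (hGs.D hW v) hF v hp, ← Dd_mul hW hGs (hF.D hW v) v hp,
      ← Dd_add hW s4 s5 v hp, Dd_congr hW (first v) v hp, Dd_sum hW s3 v hp]
    refine Finset.sum_congr rfl fun i _ => ?_
    rw [Dd_add hW (s1 i) (s2 i) v hp, Dd_mul hW ((hP i).D hW v) (hP i) v hp,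
      Dd_mul hW (hP i) ((hP i).D hW v) v hp]
  have third : ∀ i, Dd τ (Dd (e i) F) p = ∑ j, Dd (e j) (Dd (e j) (Dd (e i) F)) p := by
    intro i
    rw [Dd_comm hW hF τ (e i) hp, Dd_congr hW hheat (e i) hp,
      Dd_sum hW (fun j => (hP j).D hW (e j)) (e i) hp]
    refine Finset.sum_congr rfl fun j _ => ?_
    rw [Dd_comm hW (hP j) (e i) (e j) hp]
    exact Dd_congr hW (fun q hq => Dd_comm hW hF (e i) (e j) hq) (e j) hp
  have f1 := first τ p hp
  simp only [third] at f1
  rw [hheat p hp] at f1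
  have f2 := fun k => first (e k) p hp
  have f3 := fun k => second (e k)
  have f0 := hGF p hp
  have hf := hpos p hp
  generalize F p = f at *
  generalize G p = g at *
  generalize Dd τ G p = tg at *
  generalize hp' : (fun i => Dd (e i) F p) = P at *
  generalize hH' : (fun i j => Dd (e i) (Dd (e j) F) p) = H at *
  generalize hL' : (fun i j => Dd (e j) (Dd (e j) (Dd (e i) F)) p) = L at *
  generalize hg1 : (fun i => Dd (e i) G p) = g1 at *
  generalize hg2 : (fun i => Dd (e i) (Dd (e i) G) p) = g2 at *
  have ep : ∀ i, Dd (e i) F p = P i := fun i => congrFun hp' i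
  have eH : ∀ i j, Dd (e i) (Dd (e j) F) p = H i j := fun i j => congrFun (congrFun hH' i) j
  have eL : ∀ i j, Dd (e j) (Dd (e j) (Dd (e i) F)) p = L i j :=
    fun i j => congrFun (congrFun hL' i) j
  have eg1 : ∀ i, Dd (e i) G p = g1 i := fun i => congrFun hg1 i
  have eg2 : ∀ i, Dd (e i) (Dd (e i) G) p = g2 i := fun i => congrFun hg2 i
  simp only [ep, eH, eL, eg1, eg2] at f0 f1 f2 f3 ⊢
  clear hp' hH' hL' hg1 hg2 ep eH eL eg1 eg2 first second third hGF
  have hne : f ≠ 0 := hf.ne'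
  -- sums
  have r1 : tg * f + g * ∑ i, H i i = 2 * ∑ i, ∑ j, P i * L i j := by
    rw [f1, Finset.mul_sum]
    refine Finset.sum_congr rfl fun i _ => ?_
    rw [← Finset.mul_sum]; ring
  have r2 : (∑ k, g1 k * P k) * f + g * ∑ k, P k * P k
      = 2 * ∑ k, ∑ i, P k * P i * H k i := by
    rw [Finset.sum_mul, Finset.mul_sum, Finset.mul_sum, ← Finset.sum_add_distrib]
    refine Finset.sum_congr rfl fun k _ => ?_
    have : g1 k * P k * f + g * (P k * P k) = P k * (g1 k * f + g * P k) := by ring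
    rw [this, f2, Finset.mul_sum, Finset.mul_sum]
    exact Finset.sum_congr rfl fun i _ => by ring
  have r3 : (∑ k, g2 k) * f + 2 * (∑ k, g1 k * P k) + g * ∑ k, H k k
      = 2 * ∑ k, ∑ i, P i * L i k + 2 * ∑ k, ∑ i, H k i ^ 2 := by
    simp only [Finset.sum_mul, Finset.mul_sum, ← Finset.sum_add_distrib]
    refine Finset.sum_congr rfl fun k _ => ?_
    have : g2 k * f + 2 * (g1 k * P k) + g * H k k
      = g2 k * f + g1 k * P k + (g1 k * P k + g * H k k) := by ring
    rw [this, f3]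
    exact Finset.sum_congr rfl fun i _ => by ring
  rw [Finset.sum_comm (f := fun k i => P i * L i k)] at r3
  have r4 : ∑ i, ∑ j, (H i j - P i * P j / f) ^ 2
      = (∑ k, ∑ i, H k i ^ 2) - 2 / f * (∑ k, ∑ i, P k * P i * H k i)
        + (∑ k, P k * P k) * (∑ k, P k * P k) / f ^ 2 := by
    rw [Finset.sum_mul_sum]
    simp only [Finset.sum_div, Finset.mul_sum, ← Finset.sum_add_distrib,
      ← Finset.sum_sub_distrib]
    refine Finset.sum_congr rfl fun k _ => Finset.sum_congr rfl fun i _ => ?_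
    field_simp
    ring
  rw [r4]
  rw [← f0] at r2 ⊢
  generalize (∑ i, ∑ j, P i * L i j) = C at *
  generalize (∑ k, g1 k * P k) = X at *
  generalize (∑ k, g2 k) = Y at *
  generalize (∑ k, H k k) = Z at *
  generalize (∑ k, ∑ i, P k * P i * H k i) = B at *
  generalize (∑ k, ∑ i, H k i ^ 2) = A at *
  have : tg - Y = (2 * X - 2 * A) / f := by
    rw [eq_div_iff hne]; linear_combination r1 - r3
  rw [this]
  have hX : X = (2 * B - g * (g * f)) / f := by
    rw [eq_div_iff hne]; linear_combination r2
  rw [hX]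
  field_simp
  ring

end aux

theorem pdv_slice {n : ℕ} {f : EuclideanSpace ℝ (Fin n) × ℝ → ℝ}
    {y : EuclideanSpace ℝ (Fin n)} {t : ℝ} (hf : DifferentiableAt ℝ f (y, t)) (i : Fin n) :
    pdv i (fun z => f (z, t)) y = Dd (EuclideanSpace.single i (1 : ℝ), (0 : ℝ)) f (y, t) := by
  unfold pdv Dd
  have h1 : HasFDerivAt (fun z : EuclideanSpace ℝ (Fin n) => (z, t)) _ y :=
    (hasFDerivAt_id (𝕜 := ℝ) y).prodMk (hasFDerivAt_const t y)
  have := (HasFDerivAt.comp (g := f) y hf.hasFDerivAt h1).fderiv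
  change fderiv ℝ (f ∘ fun z => (z, t)) y _ = _
  rw [this]; simp

theorem deriv_slice {n : ℕ} {f : EuclideanSpace ℝ (Fin n) × ℝ → ℝ}
    {y : EuclideanSpace ℝ (Fin n)} {t : ℝ} (hf : DifferentiableAt ℝ f (y, t)) :
    deriv (fun s => f (y, s)) t = Dd ((0 : EuclideanSpace ℝ (Fin n)), (1 : ℝ)) f (y, t) := by
  unfold Dd
  have h1 : HasDerivAt (fun s : ℝ => (y, s)) _ t :=
    (hasDerivAt_const t y).prodMk (hasDerivAt_id t)
  exact (HasFDerivAt.comp_hasDerivAt (l := f) t hf.hasFDerivAt h1).deriv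

theorem hess_slice {n : ℕ} {U : Set (EuclideanSpace ℝ (Fin n))} (hU : IsOpen U) {a b : ℝ}
    {f : EuclideanSpace ℝ (Fin n) × ℝ → ℝ} (hf : Sm (U ×ˢ Set.Ioo a b) f)
    {y : EuclideanSpace ℝ (Fin n)} (hy : y ∈ U) {t : ℝ} (ht : t ∈ Set.Ioo a b) (i j : Fin n) :
    hess i j (fun z => f (z, t)) y = Dd (EuclideanSpace.single i (1 : ℝ), (0 : ℝ))
      (Dd (EuclideanSpace.single j (1 : ℝ), (0 : ℝ)) f) (y, t) := by
  have hW : IsOpen (U ×ˢ Set.Ioo a b) := hU.prod isOpen_Ioo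
  unfold hess
  rw [← pdv_slice ((hf.D hW _).diff hW ⟨hy, ht⟩) i]
  exact Dd_congr hU (fun z hz => pdv_slice (hf.diff hW ⟨hz, ht⟩) j) _ hy

theorem lap_congr {n : ℕ} {U : Set (EuclideanSpace ℝ (Fin n))} (hU : IsOpen U)
    {f g : EuclideanSpace ℝ (Fin n) → ℝ} (h : ∀ z ∈ U, f z = g z)
    {y : EuclideanSpace ℝ (Fin n)} (hy : y ∈ U) : lap f y = lap g y := by
  unfold lap hess
  exact Finset.sum_congr rfl fun i _ =>
    Dd_congr hU (fun z hz => Dd_congr hU h _ hz) _ hy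

theorem norm_grad {n : ℕ} (f : EuclideanSpace ℝ (Fin n) → ℝ) (y : EuclideanSpace ℝ (Fin n)) :
    ‖gradient f y‖ ^ 2 = ∑ i, pdv i f y ^ 2 := by
  rw [EuclideanSpace.norm_sq_eq]
  refine Finset.sum_congr rfl fun i _ => ?_
  have : pdv i f y = gradient f y i := by
    unfold pdv gradient
    have h := InnerProductSpace.toDual_symm_apply (𝕜 := ℝ)
      (x := EuclideanSpace.single i (1 : ℝ)) (y := fderiv ℝ f y)
    rw [EuclideanSpace.inner_single_right] at h
    rw [← h]; simp
  rw [this]; simp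

/-- Flat-space Bochner-type identity: for a smooth positive solution of the heat
equation on `U × (a,b)`,
`(∂/∂t - Δ)(‖∇u‖²/u) = -(2/u) ‖∇²u - (∇u ⊗ ∇u)/u‖²_F ≤ 0`. -/
theorem stmt4 (n : ℕ) (U : Set (EuclideanSpace ℝ (Fin n))) (hU : IsOpen U)
    (a b : ℝ) (u : EuclideanSpace ℝ (Fin n) → ℝ → ℝ)
    (hsmooth : ContDiffOn ℝ (⊤ : ℕ∞) (fun p : (EuclideanSpace ℝ (Fin n)) × ℝ => u p.1 p.2)
      (U ×ˢ Set.Ioo a b))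
    (hpos : ∀ y ∈ U, ∀ t ∈ Set.Ioo a b, 0 < u y t)
    (hheat : ∀ y ∈ U, ∀ t ∈ Set.Ioo a b,
      deriv (fun s => u y s) t = lap (fun z => u z t) y) :
    ∀ y ∈ U, ∀ t ∈ Set.Ioo a b,
      (deriv (fun s => ‖gradient (fun z => u z s) y‖ ^ 2 / u y s) t
          - lap (fun z => ‖gradient (fun z' => u z' t) z‖ ^ 2 / u z t) y
        = -(2 / u y t) * ∑ i, ∑ j,
            (hess i j (fun z => u z t) y
              - pdv i (fun z => u z t) y * pdv j (fun z => u z t) y / u y t) ^ 2)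
      ∧ deriv (fun s => ‖gradient (fun z => u z s) y‖ ^ 2 / u y s) t
          - lap (fun z => ‖gradient (fun z' => u z' t) z‖ ^ 2 / u z t) y ≤ 0 := by
  have hW : IsOpen (U ×ˢ Set.Ioo a b) := hU.prod isOpen_Ioo
  let F : EuclideanSpace ℝ (Fin n) × ℝ → ℝ := fun p => u p.1 p.2
  have hF : Sm (U ×ˢ Set.Ioo a b) F := hsmooth
  let e : Fin n → EuclideanSpace ℝ (Fin n) × ℝ := fun i => (EuclideanSpace.single i (1 : ℝ), 0)
  let G : EuclideanSpace ℝ (Fin n) × ℝ → ℝ := fun p => (∑ i, Dd (e i) F p ^ 2) / F p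
  have hFpos : ∀ p ∈ U ×ˢ Set.Ioo a b, 0 < F p := fun p hp => hpos p.1 hp.1 p.2 hp.2
  have hG : Sm (U ×ˢ Set.Ioo a b) G := by
    refine ContDiffOn.div (ContDiffOn.sum fun i _ => ContDiffOn.pow (hF.D hW (e i)) 2) hF
      fun p hp => (hFpos p hp).ne'
  have hGeq : ∀ y ∈ U, ∀ t ∈ Set.Ioo a b,
      ‖gradient (fun z => u z t) y‖ ^ 2 / u y t = G (y, t) := by
    intro y hy t ht
    rw [norm_grad]
    change _ = (∑ i, Dd (e i) F (y, t) ^ 2) / u y t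
    congr 1
    refine Finset.sum_congr rfl fun i _ => ?_
    rw [← pdv_slice (hF.diff hW ⟨hy, ht⟩) i]
  have hlap : ∀ f, Sm (U ×ˢ Set.Ioo a b) f → ∀ y ∈ U, ∀ t ∈ Set.Ioo a b,
      lap (fun z => f (z, t)) y = ∑ i, Dd (e i) (Dd (e i) f) (y, t) := by
    intro f hf y hy t ht
    exact Finset.sum_congr rfl fun i _ => hess_slice hU hf hy ht i i
  intro y hy t ht
  have hmem : (y, t) ∈ U ×ˢ Set.Ioo a b := ⟨hy, ht⟩
  have main := absId hW e ((0 : EuclideanSpace ℝ (Fin n)), (1 : ℝ)) hF hFpos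
    (fun p hp => by
      have h := hheat p.1 hp.1 p.2 hp.2
      rw [← hlap F hF p.1 hp.1 p.2 hp.2]
      rw [← deriv_slice (hF.diff hW hp)]
      exact h) (G := G) (fun p _ => rfl) hG hmem
  have e1 : deriv (fun s => ‖gradient (fun z => u z s) y‖ ^ 2 / u y s) t
      = Dd ((0 : EuclideanSpace ℝ (Fin n)), (1 : ℝ)) G (y, t) := by
    rw [← deriv_slice (hG.diff hW hmem)]
    exact Filter.EventuallyEq.deriv_eq
      (Filter.eventuallyEq_of_mem (isOpen_Ioo.mem_nhds ht) fun s hs => hGeq y hy s hs)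
  have e2 : lap (fun z => ‖gradient (fun z' => u z' t) z‖ ^ 2 / u z t) y
      = ∑ i, Dd (e i) (Dd (e i) G) (y, t) := by
    rw [← hlap G hG y hy t ht]
    exact lap_congr hU (fun z hz => hGeq z hz t ht) hy
  have e3 : ∀ i j, hess i j (fun z => u z t) y = Dd (e i) (Dd (e j) F) (y, t) :=
    fun i j => hess_slice hU hF hy ht i j
  have e4 : ∀ i, pdv i (fun z => u z t) y = Dd (e i) F (y, t) :=
    fun i => pdv_slice (f := F) (hF.diff hW hmem) i
  have hu := hpos y hy t ht
  have res : deriv (fun s => ‖gradient (fun z => u z s) y‖ ^ 2 / u y s) t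
          - lap (fun z => ‖gradient (fun z' => u z' t) z‖ ^ 2 / u z t) y
        = -(2 / u y t) * ∑ i, ∑ j,
            (hess i j (fun z => u z t) y
              - pdv i (fun z => u z t) y * pdv j (fun z => u z t) y / u y t) ^ 2 := by
    rw [e1, e2, main]
    simp only [e3, e4]
    rfl
  refine ⟨res, ?_⟩
  rw [res, neg_mul]
  have : 0 ≤ (2 / u y t) * ∑ i, ∑ j,
            (hess i j (fun z => u z t) y
              - pdv i (fun z => u z t) y * pdv j (fun z => u z t) y / u y t) ^ 2 := by
    positivity
  linarith
end

section
/- Let u(y,t) = ∫_{ℝⁿ} K(y,z,t) u₀(z) dz, where K is the Euclidean heat kernel on ℝⁿ and u₀ : ℝⁿ → ℝ is continuous, compactly supported, nonnegative, and not identically zero. Fix x₀ ∈ ℝⁿ and t₀ > 0, write τ = t₀ - t, and let Ĥ(y,t) = (4πτ)^{-n/2} exp(-‖x₀-y‖²/(4τ)) for 0 < t < t₀. Then the function t ↦ ∫_{ℝⁿ} t² u(y,t)( Δ log u(y,t) + n/(2t) ) Ĥ(y,t) dy is differentiable on (0,t₀), and its derivative equals 2t² ∫_{ℝⁿ} ‖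 ∇² log u(y,t) + (1/(2t)) I ‖²_F u(y,t) Ĥ(y,t) dy, which is nonnegative; in particular the function is nondecreasing in t. -/
open Real MeasureTheory Filter Set

abbrev EE (n : ℕ) := EuclideanSpace ℝ (Fin n)

/-- explicit linear form on space-time -/
noncomputable def dd {n : ℕ} (a : Fin n → ℝ) (c : ℝ) : (EE n × ℝ) →L[ℝ] ℝ :=
  (∑ j, a j • ((EuclideanSpace.proj j : EE n →L[ℝ] ℝ).comp
    (ContinuousLinearMap.fst ℝ (EE n) ℝ))) + c • ContinuousLinearMap.snd ℝ (EE n) ℝ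

lemma dd_apply {n : ℕ} (a : Fin n → ℝ) (c : ℝ) (w : EE n × ℝ) :
    dd a c w = (∑ j, a j * w.1 j) + c * w.2 := by
  simp [dd]

lemma dd_single {n : ℕ} (a : Fin n → ℝ) (c : ℝ) (j : Fin n) :
    dd a c (EuclideanSpace.single j 1, 0) = a j := by
  rw [dd_apply]; simp

lemma dd_mul {n : ℕ} {f g : EE n × ℝ → ℝ} {a b : Fin n → ℝ} {c d : ℝ} {w : EE n × ℝ}
    (hf : HasFDerivAt f (dd a c) w) (hg : HasFDerivAt g (dd b d) w) :
    HasFDerivAt (fun w => f w * g w) (dd (fun j => a j * g w + f w * b j) (c * g w + f w * d)) w := by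
  refine (hf.mul hg).congr_fderiv ?_
  refine ContinuousLinearMap.ext fun v => ?_
  rw [dd_apply]
  simp only [_root_.add_apply, _root_.smul_apply, dd_apply, smul_eq_mul,
    mul_add, Finset.mul_sum, add_mul, Finset.sum_add_distrib]
  have e1 : ∀ j, f w * (b j * v.1 j) = f w * b j * v.1 j := fun j => by ring
  have e2 : ∀ j, g w * (a j * v.1 j) = a j * g w * v.1 j := fun j => by ring
  simp only [e1, e2]
  ring

lemma dd_sub {n : ℕ} {f g : EE n × ℝ → ℝ} {a b : Fin n → ℝ} {c d : ℝ} {w : EE n × ℝ}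
    (hf : HasFDerivAt f (dd a c) w) (hg : HasFDerivAt g (dd b d) w) :
    HasFDerivAt (fun w => f w - g w) (dd (fun j => a j - b j) (c - d)) w := by
  refine (hf.sub hg).congr_fderiv ?_
  refine ContinuousLinearMap.ext fun v => ?_
  rw [dd_apply]
  simp only [_root_.sub_apply, dd_apply, sub_mul, Finset.sum_sub_distrib]
  ring

lemma dd_comp {n : ℕ} {f : EE n × ℝ → ℝ} {a : Fin n → ℝ} {c : ℝ} {w : EE n × ℝ}
    {k : ℝ → ℝ} {k' : ℝ} (hf : HasFDerivAt f (dd a c) w) (hk : HasDerivAt k k' (f w)) :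
    HasFDerivAt (fun w => k (f w)) (dd (fun j => k' * a j) (k' * c)) w := by
  refine (hk.comp_hasFDerivAt w hf).congr_fderiv ?_
  refine ContinuousLinearMap.ext fun v => ?_
  rw [dd_apply]
  simp only [_root_.smul_apply, dd_apply, smul_eq_mul, mul_add, Finset.mul_sum,
    mul_assoc]

lemma dd_inv {n : ℕ} {f : EE n × ℝ → ℝ} {a : Fin n → ℝ} {c : ℝ} {w : EE n × ℝ}
    (hf : HasFDerivAt f (dd a c) w) (h : f w ≠ 0) :
    HasFDerivAt (fun w => (f w)⁻¹)
      (dd (fun j => -(f w ^ 2)⁻¹ * a j) (-(f w ^ 2)⁻¹ * c)) w :=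
  dd_comp hf (hasDerivAt_inv h)

noncomputable def ex {n : ℕ} (w : EE n × ℝ) (z : EE n) : ℝ :=
  Real.exp (inner ℝ w.1 z - w.2 * ‖z‖ ^ 2)

noncomputable def AA {n : ℕ} (ν : EE n → ℝ) (φ : EE n → ℝ) (w : EE n × ℝ) : ℝ :=
  ∫ z, φ z * ex w z * ν z

lemma continuous_ex {n : ℕ} : Continuous (fun p : (EE n × ℝ) × EE n => ex p.1 p.2) := by
  unfold ex; fun_prop

lemma continuous_ex' {n : ℕ} (w : EE n × ℝ) : Continuous (fun z : EE n => ex w z) := by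
  unfold ex; fun_prop

lemma continuous_dd {n : ℕ} {X : Type*} [TopologicalSpace X] {a : X → Fin n → ℝ} {c : X → ℝ}
    (ha : ∀ j, Continuous (fun x => a x j)) (hc : Continuous c) :
    Continuous (fun x => dd (a x) (c x)) := by
  unfold dd; fun_prop

lemma AA_integrable {n : ℕ} {ν φ : EE n → ℝ} (hν : Continuous ν) (hs : HasCompactSupport ν)
    (hφ : Continuous φ) (w : EE n × ℝ) : Integrable (fun z => φ z * ex w z * ν z) :=
  Continuous.integrable_of_hasCompactSupport
    ((hφ.mul (continuous_ex' w)).mul hν) hs.mul_left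

lemma ex_hasFDerivAt {n : ℕ} (w : EE n × ℝ) (z : EE n) :
    HasFDerivAt (fun w : EE n × ℝ => ex w z)
      (ex w z • dd (fun j => z j) (-∑ j, z j * z j)) w := by
  have h1 : HasFDerivAt (fun w : EE n × ℝ => inner ℝ w.1 z - w.2 * ‖z‖ ^ 2)
      (dd (fun j => z j) (-∑ j, z j * z j)) w := by
    have : (fun w : EE n × ℝ => inner ℝ w.1 z - w.2 * ‖z‖ ^ 2)
      = fun w => dd (fun j => z j) (-∑ j, z j * z j) w := by
      funext w
      rw [dd_apply, EuclideanSpace.real_norm_sq_eq]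
      simp only [PiLp.inner_apply, RCLike.inner_apply, conj_trivial]
      simp only [pow_two]
      ring
    rw [this]
    exact ContinuousLinearMap.hasFDerivAt _
  exact h1.exp

lemma AA_hasFDerivAt {n : ℕ} {ν φ : EE n → ℝ} (hν : Continuous ν) (hs : HasCompactSupport ν)
    (hφ : Continuous φ) (w : EE n × ℝ) :
    HasFDerivAt (AA ν φ)
      (dd (fun j => AA ν (fun z => z j * φ z) w)
        (-∑ j, AA ν (fun z => z j * (z j * φ z)) w)) w := by
  let F' : EE n × ℝ → EE n → (EE n × ℝ) →L[ℝ] ℝ := fun w z =>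
    (φ z * ex w z * ν z) • dd (fun j => z j) (-∑ j, z j * z j)
  have hF'c : Continuous (fun p : (EE n × ℝ) × EE n => F' p.1 p.2) := by
    have h1 : Continuous (fun p : (EE n × ℝ) × EE n => dd (fun j => p.2 j) (-∑ j, p.2 j * p.2 j)) :=
      continuous_dd (by intro j; fun_prop) (by fun_prop)
    have h2 := continuous_ex (n := n)
    have h3 : Continuous (fun p : (EE n × ℝ) × EE n => φ p.2 * ex p.1 p.2 * ν p.2) := by fun_prop
    exact h3.smul h1
  obtain ⟨C, hC⟩ := ((isCompact_closedBall w 1).prod hs.isCompact).exists_bound_of_continuousOn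
    hF'c.continuousOn
  have key := hasFDerivAt_integral_of_dominated_of_fderiv_le (𝕜 := ℝ) (μ := volume)
    (F := fun w z => φ z * ex w z * ν z) (x₀ := w) (s := Metric.closedBall w 1)
    (bound := (tsupport ν).indicator (fun _ => C)) (F' := F')
    (Metric.closedBall_mem_nhds w one_pos)
    (Eventually.of_forall fun x => (AA_integrable hν hs hφ x).aestronglyMeasurable)
    (AA_integrable hν hs hφ w)
    (by
      have : Continuous (F' w) := hF'c.comp (by fun_prop : Continuous fun z => (w, z))
      exact this.aestronglyMeasurable)
    (Eventually.of_forall fun z x hx => by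
      by_cases hz : z ∈ tsupport ν
      · rw [indicator_of_mem hz]; exact hC (x, z) ⟨hx, hz⟩
      · rw [indicator_of_notMem hz]
        simp [F', image_eq_zero_of_notMem_tsupport hz])
    (by
      rw [integrable_indicator_iff (isClosed_tsupport ν).measurableSet]
      exact integrableOn_const hs.isCompact.measure_lt_top.ne)
    (Eventually.of_forall fun z x hx => by
      have := ((ex_hasFDerivAt x z).const_mul (φ z)).mul_const (ν z)
      refine this.congr_fderiv ?_
      simp only [F']
      rw [smul_smul, smul_smul]
      congr 1; ring)
  have e : (∫ z, F' w z) = dd (fun j => AA ν (fun z => z j * φ z) w)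
        (-∑ j, AA ν (fun z => z j * (z j * φ z)) w) := by
    have hi : ∀ j : Fin n, Integrable (fun z : EE n => (z j * φ z) * ex w z * ν z) := fun j =>
      AA_integrable hν hs (by fun_prop) w
    have hi2 : ∀ j : Fin n, Integrable (fun z : EE n => (z j * (z j * φ z)) * ex w z * ν z) :=
      fun j => AA_integrable hν hs (by fun_prop) w
    have : ∀ z, F' w z = (∑ j, ((z j * φ z) * ex w z * ν z) •
        ((EuclideanSpace.proj j : EE n →L[ℝ] ℝ).comp (ContinuousLinearMap.fst ℝ (EE n) ℝ)))
        + (-∑ j, (z j * (z j * φ z)) * ex w z * ν z) • ContinuousLinearMap.snd ℝ (EE n) ℝ := by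
      intro z
      simp only [F', dd, smul_add, Finset.smul_sum, smul_smul]
      congr 1
      · refine Finset.sum_congr rfl fun j _ => ?_
        congr 1; ring
      · congr 1
        rw [mul_neg, Finset.mul_sum]
        congr 1
        refine Finset.sum_congr rfl fun j _ => ?_
        ring
    simp_rw [this]
    rw [integral_add, integral_finsetSum, integral_smul_const, integral_neg, integral_finsetSum]
    · simp only [integral_smul_const]
      rfl
    · exact fun j _ => hi2 j
    · exact fun j _ => (hi j).smul_const _
    · exact integrable_finsetSum _ fun j _ => (hi j).smul_const _
    · exact Integrable.smul_const (integrable_finsetSum _ fun j _ => hi2 j).neg _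
  rw [← e]
  exact key

lemma AA_pos {n : ℕ} {ν : EE n → ℝ} (hν : Continuous ν) (hs : HasCompactSupport ν)
    (hn : ∀ z, 0 ≤ ν z) (hne : ∃ z, ν z ≠ 0) (w : EE n × ℝ) : 0 < AA ν (fun _ => 1) w := by
  obtain ⟨z, hz⟩ := hne
  unfold AA
  refine Continuous.integral_pos_of_hasCompactSupport_nonneg_nonzero (x := z)
    ((continuous_const.mul (continuous_ex' w)).mul hν) hs.mul_left ?_ ?_
  · intro z
    have := hn z
    have h2 : 0 < ex w z := Real.exp_pos _
    simp only [one_mul]; positivity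
  · have h2 : 0 < ex w z := Real.exp_pos _
    simp [hz, h2.ne']

lemma AA_bound {n : ℕ} {ν φ : EE n → ℝ} (hν : Continuous ν) (hs : HasCompactSupport ν)
    (hn : ∀ z, 0 ≤ ν z) (hφ : Continuous φ) :
    ∃ C, ∀ w, |AA ν φ w| ≤ C * AA ν (fun _ => 1) w := by
  obtain ⟨C, hC⟩ := hs.isCompact.exists_bound_of_continuousOn hφ.continuousOn
  refine ⟨C, fun w => ?_⟩
  unfold AA
  rw [← integral_const_mul]
  refine (abs_integral_le_integral_abs).trans ?_
  refine integral_mono (AA_integrable hν hs hφ w).abs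
    ((AA_integrable hν hs continuous_const w).const_mul C) fun z => ?_
  have h2 : 0 < ex w z := Real.exp_pos _
  by_cases hz : z ∈ tsupport ν
  · have h3 := hC z hz
    have := hn z
    simp only [abs_mul, abs_of_pos h2, abs_of_nonneg (hn z), one_mul]
    rw [Real.norm_eq_abs] at h3
    rw [mul_assoc]
    gcongr
  · simp [image_eq_zero_of_notMem_tsupport hz]

/-- normalised moments -/
noncomputable def gg {n : ℕ} (ν : EE n → ℝ) (φ : EE n → ℝ) (w : EE n × ℝ) : ℝ :=
  AA ν φ w / AA ν (fun _ => 1) w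

def Nice {n : ℕ} (P : EE n × ℝ → ℝ) : Prop := Continuous P ∧ ∃ C, ∀ w, |P w| ≤ C

lemma Nice.add {n : ℕ} {P Q : EE n × ℝ → ℝ} (hP : Nice P) (hQ : Nice Q) :
    Nice (fun w => P w + Q w) := by
  obtain ⟨h1, C, hC⟩ := hP
  obtain ⟨h2, D, hD⟩ := hQ
  exact ⟨h1.add h2, C + D, fun w => (abs_add_le _ _).trans (add_le_add (hC w) (hD w))⟩

lemma Nice.mul {n : ℕ} {P Q : EE n × ℝ → ℝ} (hP : Nice P) (hQ : Nice Q) :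
    Nice (fun w => P w * Q w) := by
  obtain ⟨h1, C, hC⟩ := hP
  obtain ⟨h2, D, hD⟩ := hQ
  refine ⟨h1.mul h2, C * D, fun w => ?_⟩
  rw [abs_mul]
  exact mul_le_mul (hC w) (hD w) (abs_nonneg _) ((abs_nonneg _).trans (hC w))

lemma Nice.const {n : ℕ} (c : ℝ) : Nice (n := n) (fun _ => c) :=
  ⟨continuous_const, |c|, fun _ => le_rfl⟩

lemma Nice.neg {n : ℕ} {P : EE n × ℝ → ℝ} (hP : Nice P) : Nice (fun w => - P w) := by
  obtain ⟨h1, C, hC⟩ := hP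
  exact ⟨h1.neg, C, fun w => by rw [abs_neg]; exact hC w⟩

lemma Nice.sub {n : ℕ} {P Q : EE n × ℝ → ℝ} (hP : Nice P) (hQ : Nice Q) :
    Nice (fun w => P w - Q w) := by
  simpa only [sub_eq_add_neg] using hP.add hQ.neg

lemma Nice.sum {n : ℕ} {ι : Type*} (s : Finset ι) {P : ι → EE n × ℝ → ℝ} (hP : ∀ i, Nice (P i)) :
    Nice (fun w => ∑ i ∈ s, P i w) := by
  classical
  induction s using Finset.induction_on with
  | empty => simpa using Nice.const (n := n) 0
  | insert a s ha ih => simpa only [Finset.sum_insert ha] using (hP a).add ih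

lemma gg_nice {n : ℕ} {ν φ : EE n → ℝ} (hν : Continuous ν) (hs : HasCompactSupport ν)
    (hn : ∀ z, 0 ≤ ν z) (hne : ∃ z, ν z ≠ 0) (hφ : Continuous φ) : Nice (gg ν φ) := by
  have hp := AA_pos hν hs hn hne
  have hcont : ∀ ψ : EE n → ℝ, Continuous ψ → Continuous (AA ν ψ) := fun ψ hψ =>
    continuous_iff_continuousAt.2 fun w => (AA_hasFDerivAt hν hs hψ w).continuousAt
  refine ⟨(hcont φ hφ).div (hcont _ continuous_const) fun w => (hp w).ne', ?_⟩
  obtain ⟨C, hC⟩ := AA_bound hν hs hn hφ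
  refine ⟨C, fun w => ?_⟩
  rw [gg, abs_div, abs_of_pos (hp w), div_le_iff₀ (hp w)]
  exact hC w

lemma gg_hasFDerivAt {n : ℕ} {ν φ : EE n → ℝ} (hν : Continuous ν) (hs : HasCompactSupport ν)
    (hn : ∀ z, 0 ≤ ν z) (hne : ∃ z, ν z ≠ 0) (hφ : Continuous φ) (w : EE n × ℝ) :
    HasFDerivAt (gg ν φ)
      (dd (fun j => gg ν (fun z => z j * φ z) w - gg ν (fun z => z j) w * gg ν φ w)
        (-∑ j, (gg ν (fun z => z j * (z j * φ z)) w - gg ν (fun z => z j * z j) w * gg ν φ w))) w := by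
  have hp := AA_pos hν hs hn hne w
  have h1 := AA_hasFDerivAt hν hs hφ w
  have h2 := AA_hasFDerivAt hν hs (φ := fun _ => 1) continuous_const w
  have h3 := dd_mul h1 (dd_inv h2 hp.ne')
  refine HasFDerivAt.congr_fderiv (h3.congr_of_eventuallyEq
    (Eventually.of_forall fun x => by simp only [gg, div_eq_mul_inv])) ?_
  have hp' := hp.ne'
  simp only [mul_one, gg] 
  congr 1
  · funext j
    field_simp
    ring
  · rw [Finset.sum_sub_distrib, ← Finset.sum_mul, ← Finset.sum_div, ← Finset.sum_div]
    field_simp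
    ring

lemma gauss_integrable {n : ℕ} (C : ℝ) : Integrable (fun ξ : EE n => C * Real.exp (-‖ξ‖ ^ 2 / 8)) := by
  have h := (GaussianFourier.integrable_cexp_neg_mul_sq_norm_add (V := EE n) (b := (1 / 8 : ℂ))
    (by norm_num) 0 0).norm
  refine (h.congr (Eventually.of_forall fun ξ => ?_)).const_mul C
  simp only [Complex.norm_exp]
  congr 1
  simp only [zero_mul, add_zero]
  have : (-(1 / 8 : ℂ) * (‖ξ‖ : ℂ) ^ 2) = ((-‖ξ‖ ^ 2 / 8 : ℝ) : ℂ) := by push_cast; ring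
  rw [this, Complex.ofReal_re]

lemma wt_bound {n : ℕ} {ν : EE n → ℝ} (hν : Continuous ν) (hs : HasCompactSupport ν)
    (hn : ∀ z, 0 ≤ ν z) (s0 ρ : ℝ) :
    ∃ C, ∀ (r : ℝ) (ξ : EE n), |r| ≤ ρ →
      (1 + ‖ξ‖) * (Real.exp (-‖ξ‖ ^ 2 / 4) * AA ν (fun _ => 1) (r • ξ, s0 + r ^ 2))
        ≤ C * Real.exp (-‖ξ‖ ^ 2 / 8) := by
  obtain ⟨R, hR⟩ := hs.isCompact.exists_bound_of_continuousOn (f := fun z : EE n => z)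
    continuous_id.continuousOn
  set M := ∫ z, ν z
  have hM : 0 ≤ M := integral_nonneg hn
  set a := ρ * |R| with ha
  refine ⟨M * Real.exp (|s0| * |R| ^ 2 + 2 * (1 + a) ^ 2), fun r ξ hr => ?_⟩
  have hρ : 0 ≤ ρ := (abs_nonneg r).trans hr
  have h1 : AA ν (fun _ => 1) (r • ξ, s0 + r ^ 2) ≤ Real.exp (a * ‖ξ‖ + |s0| * |R| ^ 2) * M := by
    unfold AA
    rw [← integral_const_mul]
    refine integral_mono (AA_integrable hν hs continuous_const _)
      ((hν.integrable_of_hasCompactSupport hs).const_mul _) fun z => ?_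
    by_cases hz : z ∈ tsupport ν
    · simp only [one_mul]
      refine mul_le_mul_of_nonneg_right ?_ (hn z)
      unfold ex
      refine Real.exp_le_exp.2 ?_
      have hz' : ‖z‖ ≤ |R| := (hR z hz).trans (le_abs_self R)
      have e1 : inner ℝ (r • ξ) z ≤ a * ‖ξ‖ := by
        refine (real_inner_le_norm _ _).trans ?_
        rw [norm_smul, Real.norm_eq_abs, ha]
        calc |r| * ‖ξ‖ * ‖z‖ ≤ ρ * ‖ξ‖ * |R| := by gcongr
          _ = _ := by ring
      have e2 : -(s0 + r ^ 2) * ‖z‖ ^ 2 ≤ |s0| * |R| ^ 2 := by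
        calc -(s0 + r ^ 2) * ‖z‖ ^ 2 ≤ |s0| * ‖z‖ ^ 2 := by
              gcongr
              have := neg_abs_le s0
              nlinarith [sq_nonneg r]
          _ ≤ _ := by gcongr
      simp only
      linarith
    · simp [image_eq_zero_of_notMem_tsupport hz]
  have h2 : 1 + ‖ξ‖ ≤ Real.exp ‖ξ‖ := by rw [add_comm]; exact Real.add_one_le_exp _
  calc (1 + ‖ξ‖) * (Real.exp (-‖ξ‖ ^ 2 / 4) * AA ν (fun _ => 1) (r • ξ, s0 + r ^ 2))
      ≤ Real.exp ‖ξ‖ * (Real.exp (-‖ξ‖ ^ 2 / 4) * (Real.exp (a * ‖ξ‖ + |s0| * |R| ^ 2) * M)) := by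
        have : 0 ≤ AA ν (fun _ => 1) (r • ξ, s0 + r ^ 2) := integral_nonneg fun z => by
          have := hn z
          have h2 : 0 < ex (r • ξ, s0 + r ^ 2) z := Real.exp_pos _
          simp only [one_mul]; positivity
        gcongr
    _ = M * Real.exp (‖ξ‖ + (-‖ξ‖ ^ 2 / 4) + (a * ‖ξ‖ + |s0| * |R| ^ 2)) := by
        rw [Real.exp_add (‖ξ‖ + _), Real.exp_add ‖ξ‖]; ring
    _ ≤ M * Real.exp ((|s0| * |R| ^ 2 + 2 * (1 + a) ^ 2) + -‖ξ‖ ^ 2 / 8) := by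
        refine mul_le_mul_of_nonneg_left (Real.exp_le_exp.2 ?_) hM
        nlinarith [sq_nonneg (‖ξ‖ - 4 * (1 + a))]
    _ = _ := by rw [Real.exp_add]; ring

lemma nice_int {n : ℕ} {ν : EE n → ℝ} (hν : Continuous ν) (hs : HasCompactSupport ν)
    (hn : ∀ z, 0 ≤ ν z) (hne : ∃ z, ν z ≠ 0) (s0 r : ℝ) {P : EE n × ℝ → ℝ} (hP : Nice P)
    {f : EE n → ℝ} (hf : Continuous f) (hfb : ∀ ξ, |f ξ| ≤ 1 + ‖ξ‖) :
    Integrable (fun ξ : EE n => f ξ * (Real.exp (-‖ξ‖ ^ 2 / 4) *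
      (AA ν (fun _ => 1) (r • ξ, s0 + r ^ 2) * P (r • ξ, s0 + r ^ 2)))) := by
  obtain ⟨C, hC⟩ := wt_bound hν hs hn s0 |r|
  obtain ⟨hPc, K, hK⟩ := hP
  have hAc : Continuous (AA ν (fun _ => 1)) := 
    continuous_iff_continuousAt.2 fun w => (AA_hasFDerivAt hν hs continuous_const w).continuousAt
  refine (gauss_integrable (n := n) (K * C)).mono' ?_ (Eventually.of_forall fun ξ => ?_)
  · exact Continuous.aestronglyMeasurable (by fun_prop)
  · have hp := AA_pos hν hs hn hne (r • ξ, s0 + r ^ 2)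
    have h1 := hC r ξ le_rfl
    have h2 := hK (r • ξ, s0 + r ^ 2)
    have h3 := hfb ξ
    have hK0 : 0 ≤ K := (abs_nonneg _).trans h2
    rw [Real.norm_eq_abs, abs_mul, abs_mul, abs_mul, abs_of_pos hp, abs_of_pos (Real.exp_pos _)]
    calc _ ≤ (1 + ‖ξ‖) * (Real.exp (-‖ξ‖ ^ 2 / 4) * (AA ν (fun _ => 1) (r • ξ, s0 + r ^ 2) * K)) := by
          gcongr
      _ = K * ((1 + ‖ξ‖) * (Real.exp (-‖ξ‖ ^ 2 / 4) * AA ν (fun _ => 1) (r • ξ, s0 + r ^ 2))) := by ring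
      _ ≤ K * (C * Real.exp (-‖ξ‖ ^ 2 / 8)) := by gcongr
      _ = _ := by ring

lemma coord_bound {n : ℕ} (j : Fin n) (ξ : EE n) : |ξ j| ≤ 1 + ‖ξ‖ := by
  have := PiLp.norm_apply_le ξ j
  rw [Real.norm_eq_abs] at this
  linarith

lemma nice_int1 {n : ℕ} {ν : EE n → ℝ} (hν : Continuous ν) (hs : HasCompactSupport ν)
    (hn : ∀ z, 0 ≤ ν z) (hne : ∃ z, ν z ≠ 0) (s0 r : ℝ) {P : EE n × ℝ → ℝ} (hP : Nice P) :
    Integrable (fun ξ : EE n => Real.exp (-‖ξ‖ ^ 2 / 4) *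
      (AA ν (fun _ => 1) (r • ξ, s0 + r ^ 2) * P (r • ξ, s0 + r ^ 2))) := by
  simpa using nice_int hν hs hn hne s0 r hP (f := fun _ => 1) continuous_const
    (fun ξ => by simp)

lemma ibp {n : ℕ} {ν : EE n → ℝ} (hν : Continuous ν) (hs : HasCompactSupport ν)
    (hn : ∀ z, 0 ≤ ν z) (hne : ∃ z, ν z ≠ 0) (s0 r : ℝ) (j : Fin n)
    {Q T : EE n × ℝ → ℝ} (hQ : Nice Q) (hT : Nice T)
    (h : ∀ w, ∃ a c, HasFDerivAt (fun w => AA ν (fun _ => 1) w * Q w) (dd a c) w ∧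
      a j = AA ν (fun _ => 1) w * T w) :
    ∫ ξ : EE n, ξ j * (Real.exp (-‖ξ‖ ^ 2 / 4) *
      (AA ν (fun _ => 1) (r • ξ, s0 + r ^ 2) * Q (r • ξ, s0 + r ^ 2)))
    = 2 * r * ∫ ξ : EE n, Real.exp (-‖ξ‖ ^ 2 / 4) *
      (AA ν (fun _ => 1) (r • ξ, s0 + r ^ 2) * T (r • ξ, s0 + r ^ 2)) := by
  have hG : ∀ ξ : EE n, HasFDerivAt (fun ξ : EE n => Real.exp (-‖ξ‖ ^ 2 / 4))
      (Real.exp (-‖ξ‖ ^ 2 / 4) • ((-1 / 4 : ℝ) • ((2 : ℝ) • innerSL ℝ ξ))) ξ := by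
    intro ξ
    have h0 : HasFDerivAt (fun ξ : EE n => ‖ξ‖ ^ 2) ((2 : ℝ) • innerSL ℝ ξ) ξ := by
      refine (hasStrictFDerivAt_norm_sq ξ).hasFDerivAt.congr_fderiv ?_
      rw [two_smul, two_smul]
    have h1 := (h0.const_mul (-1 / 4 : ℝ)).exp
    have e : ∀ ξ : EE n, -‖ξ‖ ^ 2 / 4 = -1 / 4 * ‖ξ‖ ^ 2 := fun ξ => by ring
    simp only [e]
    exact h1
  have hG' : ∀ ξ : EE n, fderiv ℝ (fun ξ : EE n => Real.exp (-‖ξ‖ ^ 2 / 4)) ξ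
      (EuclideanSpace.single j 1) = - (1 / 2) * (ξ j * Real.exp (-‖ξ‖ ^ 2 / 4)) := by
    intro ξ
    rw [(hG ξ).fderiv]
    simp [EuclideanSpace.inner_single_right]
    ring
  choose a c hac ha using h
  have hg : ∀ ξ : EE n, HasFDerivAt (fun ξ : EE n => AA ν (fun _ => 1) (r • ξ, s0 + r ^ 2) * Q (r • ξ, s0 + r ^ 2))
      ((dd (a (r • ξ, s0 + r ^ 2)) (c (r • ξ, s0 + r ^ 2))).comp
        ((r • ContinuousLinearMap.id ℝ (EE n)).prod 0)) ξ := by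
    intro ξ
    have h1 : HasFDerivAt (fun ξ : EE n => (r • ξ, s0 + r ^ 2))
      ((r • ContinuousLinearMap.id ℝ (EE n)).prod 0) ξ :=
      ((hasFDerivAt_id ξ).const_smul r).prodMk (hasFDerivAt_const _ _)
    exact (hac (r • ξ, s0 + r ^ 2)).comp ξ h1
  have hg' : ∀ ξ : EE n, fderiv ℝ (fun ξ : EE n => AA ν (fun _ => 1) (r • ξ, s0 + r ^ 2) * Q (r • ξ, s0 + r ^ 2)) ξ
      (EuclideanSpace.single j 1) = r * (AA ν (fun _ => 1) (r • ξ, s0 + r ^ 2) * T (r • ξ, s0 + r ^ 2)) := by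
    intro ξ
    rw [(hg ξ).fderiv, ← ha, ContinuousLinearMap.comp_apply]
    have : ((r • ContinuousLinearMap.id ℝ (EE n)).prod (0 : EE n →L[ℝ] ℝ)) (EuclideanSpace.single j 1)
      = r • (EuclideanSpace.single j (1 : ℝ), (0 : ℝ)) := by
      simp [ContinuousLinearMap.prod_apply]
    rw [this, map_smul, dd_single, smul_eq_mul]
  have i1 := nice_int hν hs hn hne s0 r hQ (f := fun ξ => ξ j) (by fun_prop) (coord_bound j)
  have i2 := nice_int1 hν hs hn hne s0 r hT
  have key := integral_mul_fderiv_eq_neg_fderiv_mul_of_integrable (μ := (volume : Measure (EE n)))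
    (f := fun ξ : EE n => Real.exp (-‖ξ‖ ^ 2 / 4))
    (g := fun ξ : EE n => AA ν (fun _ => 1) (r • ξ, s0 + r ^ 2) * Q (r • ξ, s0 + r ^ 2))
    (v := EuclideanSpace.single j 1)
    (by
      simp only [hG']
      refine (i1.const_mul (-(1 / 2))).congr (Eventually.of_forall fun ξ => ?_)
      simp only
      ring)
    (by
      simp only [hg']
      refine (i2.const_mul r).congr (Eventually.of_forall fun ξ => ?_)
      simp only
      ring)
    (nice_int1 hν hs hn hne s0 r hQ)
    (fun ξ _ => (hG ξ).differentiableAt) (fun ξ _ => (hg ξ).differentiableAt)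
  simp only [hG', hg'] at key
  have e1 : ∀ ξ : EE n, Real.exp (-‖ξ‖ ^ 2 / 4) * (r * (AA ν (fun _ => 1) (r • ξ, s0 + r ^ 2) * T (r • ξ, s0 + r ^ 2)))
    = r * (Real.exp (-‖ξ‖ ^ 2 / 4) * (AA ν (fun _ => 1) (r • ξ, s0 + r ^ 2) * T (r • ξ, s0 + r ^ 2))) :=
    fun ξ => by ring
  have e2 : ∀ ξ : EE n, - (1 / 2) * (ξ j * Real.exp (-‖ξ‖ ^ 2 / 4)) * (AA ν (fun _ => 1) (r • ξ, s0 + r ^ 2) * Q (r • ξ, s0 + r ^ 2))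
    = -(1 / 2) * (ξ j * (Real.exp (-‖ξ‖ ^ 2 / 4) *
      (AA ν (fun _ => 1) (r • ξ, s0 + r ^ 2) * Q (r • ξ, s0 + r ^ 2)))) :=
    fun ξ => by ring
  simp only [e1, e2] at key
  rw [integral_const_mul, integral_const_mul] at key
  linarith

lemma key_deriv {n : ℕ} {ν : EE n → ℝ} (hν : Continuous ν) (hs : HasCompactSupport ν)
    (hn : ∀ z, 0 ≤ ν z) (hne : ∃ z, ν z ≠ 0) (s0 r : ℝ)
    {P S : EE n × ℝ → ℝ} {Q T : Fin n → EE n × ℝ → ℝ} (hP : Nice P) (hS : Nice S)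
    (hQ : ∀ j, Nice (Q j)) (hT : ∀ j, Nice (T j))
    (h1 : ∀ w, HasFDerivAt (fun w => AA ν (fun _ => 1) w * P w)
      (dd (fun j => AA ν (fun _ => 1) w * Q j w) (AA ν (fun _ => 1) w * S w)) w)
    (h2 : ∀ j w, ∃ a c, HasFDerivAt (fun w => AA ν (fun _ => 1) w * Q j w) (dd a c) w ∧
      a j = AA ν (fun _ => 1) w * T j w) :
    HasDerivAt (fun r : ℝ => ∫ ξ : EE n, Real.exp (-‖ξ‖ ^ 2 / 4) *
      (AA ν (fun _ => 1) (r • ξ, s0 + r ^ 2) * P (r • ξ, s0 + r ^ 2)))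
    (2 * r * ∫ ξ : EE n, Real.exp (-‖ξ‖ ^ 2 / 4) *
      (AA ν (fun _ => 1) (r • ξ, s0 + r ^ 2) *
        ((∑ j, T j (r • ξ, s0 + r ^ 2)) + S (r • ξ, s0 + r ^ 2)))) r := by
  let F' : ℝ → EE n → ℝ := fun r ξ =>
    (∑ j, ξ j * (Real.exp (-‖ξ‖ ^ 2 / 4) *
      (AA ν (fun _ => 1) (r • ξ, s0 + r ^ 2) * Q j (r • ξ, s0 + r ^ 2)))) +
    2 * r * (Real.exp (-‖ξ‖ ^ 2 / 4) *
      (AA ν (fun _ => 1) (r • ξ, s0 + r ^ 2) * S (r • ξ, s0 + r ^ 2)))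
  have iQ : ∀ j, Integrable (fun ξ : EE n => ξ j * (Real.exp (-‖ξ‖ ^ 2 / 4) *
      (AA ν (fun _ => 1) (r • ξ, s0 + r ^ 2) * Q j (r • ξ, s0 + r ^ 2)))) := fun j =>
    nice_int hν hs hn hne s0 r (hQ j) (f := fun ξ => ξ j) (by fun_prop) (coord_bound j)
  have iT := fun j => nice_int1 hν hs hn hne s0 r (hT j)
  have iS := nice_int1 hν hs hn hne s0 r hS
  have iF' : Integrable (F' r) := (integrable_finsetSum _ fun j _ => iQ j).add (iS.const_mul _)
  have hval : ∫ ξ, F' r ξ = 2 * r * ∫ ξ : EE n, Real.exp (-‖ξ‖ ^ 2 / 4) *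
      (AA ν (fun _ => 1) (r • ξ, s0 + r ^ 2) *
        ((∑ j, T j (r • ξ, s0 + r ^ 2)) + S (r • ξ, s0 + r ^ 2))) := by
    simp only [F']
    rw [integral_add (integrable_finsetSum _ fun j _ => iQ j) (iS.const_mul _),
      integral_finsetSum _ fun j _ => iQ j, integral_const_mul]
    simp_rw [ibp hν hs hn hne s0 r _ (hQ _) (hT _) (h2 _)]
    rw [← Finset.mul_sum, ← mul_add, ← integral_finsetSum _ fun j _ => iT j,
      ← integral_add (integrable_finsetSum _ fun j _ => iT j) iS]
    congr 2
    funext ξ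
    rw [mul_add, mul_add, Finset.mul_sum, Finset.mul_sum]
  rw [← hval]
  obtain ⟨C, hC⟩ := wt_bound hν hs hn s0 (|r| + 1)
  choose K hK using fun j => (hQ j).2
  obtain ⟨L, hL⟩ := hS.2
  refine (hasDerivAt_integral_of_dominated_loc_of_deriv_le (μ := (volume : Measure (EE n)))
    (F := fun r ξ => Real.exp (-‖ξ‖ ^ 2 / 4) *
      (AA ν (fun _ => 1) (r • ξ, s0 + r ^ 2) * P (r • ξ, s0 + r ^ 2)))
    (F' := F') (x₀ := r) (s := Metric.ball r 1)
    (bound := fun ξ => ((∑ j, K j) + 2 * (|r| + 1) * L) * C * Real.exp (-‖ξ‖ ^ 2 / 8))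
    (Metric.ball_mem_nhds r one_pos)
    (Eventually.of_forall fun x => (nice_int1 hν hs hn hne s0 x hP).aestronglyMeasurable)
    (nice_int1 hν hs hn hne s0 r hP) iF'.aestronglyMeasurable ?_ (gauss_integrable _) ?_).2
  · refine Eventually.of_forall fun ξ x hx => ?_
    have hx' : |x| ≤ |r| + 1 := by
      rw [Metric.mem_ball, Real.dist_eq] at hx
      have := abs_sub_abs_le_abs_sub x r
      linarith
    have hb := hC x ξ hx'
    set w : EE n × ℝ := (x • ξ, s0 + x ^ 2) with hw
    have hp := AA_pos hν hs hn hne w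
    set W := Real.exp (-‖ξ‖ ^ 2 / 4) * AA ν (fun _ => 1) w with hW
    have hWp : 0 < W := mul_pos (Real.exp_pos _) hp
    have hK0 : ∀ j, 0 ≤ K j := fun j => (abs_nonneg _).trans (hK j w)
    have hL0 : 0 ≤ L := (abs_nonneg _).trans (hL w)
    have eF : F' x ξ = (∑ j, ξ j * (W * Q j w)) + 2 * x * (W * S w) := by
      simp only [F', hW, ← hw, mul_assoc]
    rw [Real.norm_eq_abs, eF]
    calc |(∑ j, ξ j * (W * Q j w)) + 2 * x * (W * S w)|
        ≤ (∑ j, |ξ j * (W * Q j w)|) + |2 * x * (W * S w)| :=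
          (abs_add_le _ _).trans (by gcongr; exact Finset.abs_sum_le_sum_abs _ _)
      _ ≤ (∑ j, (1 + ‖ξ‖) * (W * K j)) + 2 * (|r| + 1) * ((1 + ‖ξ‖) * (W * L)) := by
          refine add_le_add (Finset.sum_le_sum fun j _ => ?_) ?_
          · rw [abs_mul, abs_mul, abs_of_pos hWp]
            have := coord_bound j ξ
            have := hK j w
            gcongr
          · rw [abs_mul, abs_mul, abs_mul, abs_of_pos hWp, abs_two]
            have := hL w
            have h3 : W * |S w| ≤ (1 + ‖ξ‖) * (W * L) := by
              calc W * |S w| ≤ W * L := by gcongr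
                _ ≤ _ := le_mul_of_one_le_left (by positivity) (by linarith [norm_nonneg ξ])
            gcongr
      _ = ((∑ j, K j) + 2 * (|r| + 1) * L) * ((1 + ‖ξ‖) * W) := by
          rw [← Finset.mul_sum, ← Finset.mul_sum]; ring
      _ ≤ ((∑ j, K j) + 2 * (|r| + 1) * L) * (C * Real.exp (-‖ξ‖ ^ 2 / 8)) := by
          have : 0 ≤ ∑ j, K j := Finset.sum_nonneg fun j _ => hK0 j
          gcongr
      _ = _ := by ring
  · refine Eventually.of_forall fun ξ x hx => ?_
    have hcurve : HasDerivAt (fun x : ℝ => (x • ξ, s0 + x ^ 2)) (ξ, 2 * x) x := by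
      have a1 : HasDerivAt (fun x : ℝ => x • ξ) ξ x := by
        simpa using (hasDerivAt_id x).smul_const ξ
      have a2 : HasDerivAt (fun x : ℝ => s0 + x ^ 2) (2 * x) x := by
        simpa using (hasDerivAt_pow 2 x).const_add s0
      exact a1.prodMk a2
    have := ((h1 (x • ξ, s0 + x ^ 2)).comp_hasDerivAt x hcurve).const_mul (Real.exp (-‖ξ‖ ^ 2 / 4))
    refine this.congr_deriv ?_
    rw [dd_apply]
    simp only [F']
    rw [mul_add, Finset.mul_sum]
    congr 1
    · refine Finset.sum_congr rfl fun j _ => ?_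
      ring
    · ring

lemma A1_hasFDerivAt {n : ℕ} {ν : EE n → ℝ} (hν : Continuous ν) (hs : HasCompactSupport ν)
    (hn : ∀ z, 0 ≤ ν z) (hne : ∃ z, ν z ≠ 0) (w : EE n × ℝ) :
    HasFDerivAt (AA ν (fun _ => 1))
      (dd (fun j => AA ν (fun _ => 1) w * gg ν (fun z => z j) w)
        (AA ν (fun _ => 1) w * -∑ j, gg ν (fun z => z j * z j) w)) w := by
  have hp := (AA_pos hν hs hn hne w).ne'
  have h := AA_hasFDerivAt hν hs (φ := fun _ => 1) continuous_const w
  refine h.congr_fderiv ?_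
  simp only [mul_one, gg]
  congr 1
  · funext j
    field_simp
  · rw [← Finset.sum_div]
    field_simp

lemma phi_deriv {n : ℕ} {ν : EE n → ℝ} (hν : Continuous ν) (hs : HasCompactSupport ν)
    (hn : ∀ z, 0 ≤ ν z) (hne : ∃ z, ν z ≠ 0) (s0 r : ℝ) (i : Fin n) :
    HasDerivAt (fun r : ℝ => ∫ ξ : EE n, Real.exp (-‖ξ‖ ^ 2 / 4) *
      (AA ν (fun _ => 1) (r • ξ, s0 + r ^ 2) *
        (gg ν (fun z => z i * z i) (r • ξ, s0 + r ^ 2)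
          - gg ν (fun z => z i) (r • ξ, s0 + r ^ 2) * gg ν (fun z => z i) (r • ξ, s0 + r ^ 2))))
    (2 * r * ∫ ξ : EE n, Real.exp (-‖ξ‖ ^ 2 / 4) *
      (AA ν (fun _ => 1) (r • ξ, s0 + r ^ 2) *
        (-2 * ∑ j, (gg ν (fun z => z j * z i) (r • ξ, s0 + r ^ 2)
          - gg ν (fun z => z j) (r • ξ, s0 + r ^ 2)
            * gg ν (fun z => z i) (r • ξ, s0 + r ^ 2)) ^ 2))) r := by
  have ng : ∀ φ : EE n → ℝ, Continuous φ → Nice (gg ν φ) := fun φ hφ =>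
    gg_nice hν hs hn hne hφ
  have dg := fun (φ : EE n → ℝ) (hφ : Continuous φ) => gg_hasFDerivAt hν hs hn hne hφ
  have dA := A1_hasFDerivAt hν hs hn hne
  have n1 : ∀ j, Nice (gg ν (fun z => z j)) := fun j => ng _ (by fun_prop)
  have n2 : ∀ j k, Nice (gg ν (fun z => z j * z k)) := fun j k => ng _ (by fun_prop)
  have n3 : ∀ j k l, Nice (gg ν (fun z => z j * (z k * z l))) := fun j k l => ng _ (by fun_prop)
  have n4 : ∀ j k l m, Nice (gg ν (fun z => z j * (z k * (z l * z m)))) :=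
    fun j k l m => ng _ (by fun_prop)
  have d1 := fun j => dg (fun z => z j) (by fun_prop)
  have d2 := fun j k => dg (fun z => z j * z k) (by fun_prop)
  have d3 := fun j k l => dg (fun z => z j * (z k * z l)) (by fun_prop)
  let P : EE n × ℝ → ℝ := fun w => gg ν (fun z => z i * z i) w
    - gg ν (fun z => z i) w * gg ν (fun z => z i) w
  let Q : Fin n → EE n × ℝ → ℝ := fun j w => (gg ν (fun z => z j * (z i * z i)) w
    - (2 * gg ν (fun z => z i) w) * gg ν (fun z => z j * z i) w)
    - -(gg ν (fun z => z j) w * (gg ν (fun z => z i) w * gg ν (fun z => z i) w))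
  let S : EE n × ℝ → ℝ := fun w => -∑ k, ((gg ν (fun z => z k * (z k * (z i * z i))) w
    - (2 * gg ν (fun z => z i) w) * gg ν (fun z => z k * (z k * z i)) w)
    + gg ν (fun z => z k * z k) w * (gg ν (fun z => z i) w * gg ν (fun z => z i) w))
  let T : Fin n → EE n × ℝ → ℝ := fun j w => ((gg ν (fun z => z j * (z j * (z i * z i))) w
    - (2 * gg ν (fun z => z i) w) * gg ν (fun z => z j * (z j * z i)) w)
    + gg ν (fun z => z j * z j) w * (gg ν (fun z => z i) w * gg ν (fun z => z i) w))
    - 2 * ((gg ν (fun z => z j * z i) w - gg ν (fun z => z j) w * gg ν (fun z => z i) w) *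
      (gg ν (fun z => z j * z i) w - gg ν (fun z => z j) w * gg ν (fun z => z i) w))
  have c2 := Nice.const (n := n) 2
  have key := key_deriv hν hs hn hne s0 r (P := P) (S := S) (Q := Q) (T := T)
    ((n2 i i).sub ((n1 i).mul (n1 i)))
    (Nice.neg (Nice.sum _ fun k => ((n4 k k i i).sub ((c2.mul (n1 i)).mul (n3 k k i))).add
      ((n2 k k).mul ((n1 i).mul (n1 i)))))
    (fun j => ((n3 j i i).sub ((c2.mul (n1 i)).mul (n2 j i))).sub
      ((n1 j).mul ((n1 i).mul (n1 i))).neg)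
    (fun j => (((n4 j j i i).sub ((c2.mul (n1 i)).mul (n3 j j i))).add
      ((n2 j j).mul ((n1 i).mul (n1 i)))).sub (c2.mul
        (((n2 j i).sub ((n1 j).mul (n1 i))).mul ((n2 j i).sub ((n1 j).mul (n1 i))))))
    (by
      intro w
      refine (dd_mul (dA w) (dd_sub (d2 i i w) (dd_mul (d1 i w) (d1 i w)))).congr_fderiv ?_
      congr 1
      · funext j
        simp only [Q]
        ring
      · simp only [S, Finset.sum_add_distrib, Finset.sum_sub_distrib, ← Finset.mul_sum,
          ← Finset.sum_mul]
        ring)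
    (by
      intro j w
      have dk : HasFDerivAt (fun w => 2 * gg ν (fun z => z i) w) _ w :=
        dd_comp (d1 i w) (k := fun x => 2 * x) (k' := 2)
          (by simpa using (hasDerivAt_id (gg ν (fun z => z i) w)).const_mul 2)
      have dn : HasFDerivAt (fun w => -(gg ν (fun z => z j) w *
          (gg ν (fun z => z i) w * gg ν (fun z => z i) w))) _ w :=
        dd_comp (dd_mul (d1 j w) (dd_mul (d1 i w) (d1 i w))) (k := fun x => -x) (k' := -1)
          (hasDerivAt_neg _)
      refine ⟨_, _, dd_mul (dA w) (dd_sub (dd_sub (d3 j i i w) (dd_mul dk (d2 j i w))) dn), ?_⟩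
      simp only [T]
      ring)
  refine key.congr_deriv ?_
  congr 2
  funext ξ
  congr 2
  simp only [T, S, Finset.sum_add_distrib, Finset.sum_sub_distrib, ← Finset.mul_sum, pow_two]
  ring

lemma u_formula {n : ℕ} (u₀ : EE n → ℝ) (x₀ y : EE n) {t : ℝ} (ht : 0 < t) :
    ∫ z, heatK n y z t * u₀ z = (4 * π * t) ^ (-(n : ℝ) / 2) * Real.exp (-‖y - x₀‖ ^ 2 / (4 * t))
      * AA (fun z => u₀ (x₀ + z)) (fun _ => 1) ((1 / (2 * t)) • (y - x₀), 1 / (4 * t)) := by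
  rw [← integral_add_left_eq_self _ x₀]
  unfold AA
  rw [← integral_const_mul]
  congr 1
  funext z
  unfold heatK ex
  have e : -‖y - (x₀ + z)‖ ^ 2 / (4 * t) = -‖y - x₀‖ ^ 2 / (4 * t) +
      (inner ℝ ((1 / (2 * t)) • (y - x₀)) z - 1 / (4 * t) * ‖z‖ ^ 2) := by
    rw [← sub_sub, norm_sub_sq_real, real_inner_smul_left]
    field_simp
    ring
  rw [e, Real.exp_add]
  ring

lemma comp_W {n : ℕ} (x₀ : EE n) (t : ℝ) {f : EE n × ℝ → ℝ} {a : Fin n → ℝ} {c : ℝ} {y : EE n}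
    (h : HasFDerivAt f (dd a c) ((1 / (2 * t)) • (y - x₀), 1 / (4 * t))) :
    ∃ L : EE n →L[ℝ] ℝ, HasFDerivAt (fun y : EE n => f ((1 / (2 * t)) • (y - x₀), 1 / (4 * t))) L y ∧
      ∀ i, L (EuclideanSpace.single i 1) = 1 / (2 * t) * a i := by
  have h1 : HasFDerivAt (fun y : EE n => ((1 / (2 * t)) • (y - x₀), 1 / (4 * t)))
      (((1 / (2 * t)) • ContinuousLinearMap.id ℝ (EE n)).prod 0) y :=
      (((hasFDerivAt_id y).sub_const x₀).const_smul (1 / (2 * t))).prodMk (hasFDerivAt_const _ _)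
  refine ⟨_, h.comp y h1, fun i => ?_⟩
  rw [ContinuousLinearMap.comp_apply]
  have : (((1 / (2 * t)) • ContinuousLinearMap.id ℝ (EE n)).prod (0 : EE n →L[ℝ] ℝ))
      (EuclideanSpace.single i 1) = (1 / (2 * t)) • (EuclideanSpace.single i (1 : ℝ), (0 : ℝ)) := by
      simp [ContinuousLinearMap.prod_apply]
  rw [this, map_smul, dd_single, smul_eq_mul]

lemma hess_log {n : ℕ} {ν : EE n → ℝ} (hν : Continuous ν) (hs : HasCompactSupport ν)
    (hn : ∀ z, 0 ≤ ν z) (hne : ∃ z, ν z ≠ 0) (x₀ : EE n) {t c : ℝ} (ht : 0 < t) (hc : 0 < c)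
    (v : EE n → ℝ) (hv : ∀ y, v y = c * Real.exp (-‖y - x₀‖ ^ 2 / (4 * t))
      * AA ν (fun _ => 1) ((1 / (2 * t)) • (y - x₀), 1 / (4 * t))) (i j : Fin n) (y : EE n) :
    hess i j (fun z => Real.log (v z)) y + (1 / (2 * t)) * (if i = j then 1 else 0)
      = 1 / (4 * t ^ 2) * (gg ν (fun z => z i * z j) ((1 / (2 * t)) • (y - x₀), 1 / (4 * t))
        - gg ν (fun z => z i) ((1 / (2 * t)) • (y - x₀), 1 / (4 * t))
          * gg ν (fun z => z j) ((1 / (2 * t)) • (y - x₀), 1 / (4 * t))) := by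
  have hp := AA_pos hν hs hn hne
  have hlog : (fun z => Real.log (v z)) = fun y => (Real.log c + (-1 / (4 * t)) * ‖y - x₀‖ ^ 2)
      + Real.log (AA ν (fun _ => 1) ((1 / (2 * t)) • (y - x₀), 1 / (4 * t))) := by
    funext y
    rw [hv, Real.log_mul (by positivity) (hp _).ne', Real.log_mul hc.ne' (Real.exp_pos _).ne',
      Real.log_exp]
    ring
  have hp1 : pdv j (fun z => Real.log (v z)) = fun y => (-1 / (2 * t)) * (y j - x₀ j)
      + 1 / (2 * t) * gg ν (fun z => z j) ((1 / (2 * t)) • (y - x₀), 1 / (4 * t)) := by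
    funext y
    rw [pdv, hlog]
    obtain ⟨L, hL, hLi⟩ := comp_W x₀ t (y := y)
      (dd_comp (A1_hasFDerivAt hν hs hn hne _) (Real.hasDerivAt_log (hp _).ne'))
    have h0 : HasFDerivAt (fun y : EE n => ‖y - x₀‖ ^ 2) ((2 : ℝ) • innerSL ℝ (y - x₀)) y := by
      have := (hasStrictFDerivAt_norm_sq (y - x₀)).hasFDerivAt.comp y
        ((hasFDerivAt_id y).sub_const x₀)
      refine this.congr_fderiv ?_
      rw [two_smul, two_smul]
      rfl
    rw [(((h0.const_mul (-1 / (4 * t))).const_add (Real.log c)).fun_add hL).fderiv,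
      _root_.add_apply, hLi]
    have := (hp ((1 / (2 * t)) • (y - x₀), 1 / (4 * t))).ne'
    congr 1
    · simp [EuclideanSpace.inner_single_right]
      field_simp
      ring
    · field_simp
      exact mul_div_cancel_left₀ _ (hp _).ne'
  rw [hess, hp1, pdv]
  obtain ⟨L, hL, hLi⟩ := comp_W x₀ t (y := y)
      (gg_hasFDerivAt hν hs hn hne (φ := fun z => z j) (by fun_prop) _)
  have h0 : HasFDerivAt (fun y : EE n => y j - x₀ j) (EuclideanSpace.proj j : EE n →L[ℝ] ℝ) y :=
    (EuclideanSpace.proj j : EE n →L[ℝ] ℝ).hasFDerivAt.sub_const _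
  rw [((h0.const_mul (-1 / (2 * t))).fun_add (hL.const_mul (1 / (2 * t)))).fderiv,
      _root_.add_apply, _root_.smul_apply, _root_.smul_apply, hLi]
  by_cases hij : i = j
  · subst hij
    simp
    field_simp
    ring
  · have hji : j ≠ i := fun h => hij h.symm
    simp [hij, hji]
    field_simp
    try ring

lemma cov {n : ℕ} (x₀ : EE n) {κ : ℝ} (hκ : 0 < κ) (Ψ : EE n → ℝ) :
    ∫ y, Ψ y = κ ^ n * ∫ ξ : EE n, Ψ (x₀ + κ • ξ) := by
  have h := Measure.integral_comp_smul (volume : Measure (EE n)) (fun y => Ψ (x₀ + y)) κ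
  rw [h, integral_add_left_eq_self, finrank_euclideanSpace_fin, abs_of_pos (by positivity),
    smul_eq_mul]
  field_simp

lemma pref {n : ℕ} {t t₀ κ : ℝ} (ht : 0 < t) (htt : t < t₀) (hκ : 0 < κ)
    (hκ2 : κ ^ 2 = t * (t₀ - t) / t₀) :
    κ ^ n * ((4 * π * t) ^ (-(n : ℝ) / 2) * (4 * π * (t₀ - t)) ^ (-(n : ℝ) / 2))
      = (16 * π ^ 2 * t₀) ^ (-(n : ℝ) / 2) := by
  have h1 : 0 < t₀ - t := by linarith
  have h0 : 0 < t₀ := by linarith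
  have hpi := Real.pi_pos
  have e : κ ^ n = ((κ ^ 2)⁻¹) ^ (-(n : ℝ) / 2) := by
    rw [Real.inv_rpow (by positivity), ← Real.rpow_neg (by positivity), ← Real.rpow_natCast κ 2,
      ← Real.rpow_mul hκ.le, ← Real.rpow_natCast κ n]
    congr 1
    push_cast
    ring
  rw [e, ← Real.mul_rpow (by positivity) (by positivity),
    ← Real.mul_rpow (by positivity) (by positivity), hκ2]
  congr 1
  field_simp
  norm_num

lemma dens {n : ℕ} (u₀ : EE n → ℝ) (x₀ : EE n) {t t₀ r : ℝ} (ht : 0 < t) (htt : t < t₀)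
    (hr : 0 < r) (hr2 : r ^ 2 = (1 / t - 1 / t₀) / 4)
    (v H : EE n → ℝ) (hv : ∀ y, v y = (4 * π * t) ^ (-(n : ℝ) / 2) * Real.exp (-‖y - x₀‖ ^ 2 / (4 * t))
      * AA (fun z => u₀ (x₀ + z)) (fun _ => 1) ((1 / (2 * t)) • (y - x₀), 1 / (4 * t)))
    (hH : ∀ y, H y = (4 * π * (t₀ - t)) ^ (-(n : ℝ) / 2)
          * Real.exp (-‖x₀ - y‖ ^ 2 / (4 * (t₀ - t)))) (P : EE n × ℝ → ℝ) :
    ∫ y, P ((1 / (2 * t)) • (y - x₀), 1 / (4 * t)) * (v y * H y)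
      = (16 * π ^ 2 * t₀) ^ (-(n : ℝ) / 2) * ∫ ξ : EE n, Real.exp (-‖ξ‖ ^ 2 / 4) *
        (AA (fun z => u₀ (x₀ + z)) (fun _ => 1) (r • ξ, 1 / (4 * t₀) + r ^ 2)
          * P (r • ξ, 1 / (4 * t₀) + r ^ 2)) := by
  have h1 : 0 < t₀ - t := by linarith
  have h0 : 0 < t₀ := by linarith
  have hκ : 0 < 2 * t * r := by positivity
  have hκ2 : (2 * t * r) ^ 2 = t * (t₀ - t) / t₀ := by
    rw [mul_pow, hr2]; field_simp; ring
  have hs : 1 / (4 * t₀) + r ^ 2 = 1 / (4 * t) := by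
    rw [hr2]; field_simp; ring
  rw [hs, cov x₀ hκ, ← pref ht htt hκ hκ2, ← integral_const_mul, ← integral_const_mul]
  congr 1
  funext ξ
  rw [hv, hH]
  have e1 : x₀ + (2 * t * r) • ξ - x₀ = (2 * t * r) • ξ := by abel
  have e2 : ‖x₀ - (x₀ + (2 * t * r) • ξ)‖ = ‖(2 * t * r) • ξ‖ := by
    rw [← norm_neg]; congr 1; abel
  have e3 : (1 / (2 * t)) • ((2 * t * r) • ξ) = r • ξ := by
    rw [smul_smul]; congr 1; field_simp
  have e4 : ‖(2 * t * r) • ξ‖ ^ 2 = t * (t₀ - t) / t₀ * ‖ξ‖ ^ 2 := by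
    rw [norm_smul, mul_pow, Real.norm_eq_abs, sq_abs, hκ2]
  rw [e1, e2, e3, e4]
  have e5 : -‖ξ‖ ^ 2 / 4 = -(t * (t₀ - t) / t₀ * ‖ξ‖ ^ 2) / (4 * t)
      + -(t * (t₀ - t) / t₀ * ‖ξ‖ ^ 2) / (4 * (t₀ - t)) := by
    field_simp
    ring
  rw [e5, Real.exp_add]
  ring

/-- Flat-space Proposition 7 of the paper: monotonicity of the weighted
Li–Yau quantity `t ↦ ∫ t² u (Δ log u + n/(2t)) Ĥ dy`, whose derivative equals
`2t² ∫ ‖∇² log u + I/(2t)‖²_F u Ĥ dy ≥ 0`. -/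
theorem stmt8 (n : ℕ) (hn : 1 ≤ n)
    (u₀ : EuclideanSpace ℝ (Fin n) → ℝ) (hc : Continuous u₀)
    (hsupp : HasCompactSupport u₀) (hnn : ∀ z, 0 ≤ u₀ z) (hne : ∃ z, u₀ z ≠ 0)
    (u : EuclideanSpace ℝ (Fin n) → ℝ → ℝ)
    (hu : ∀ y t, u y t = ∫ z, heatK n y z t * u₀ z)
    (x₀ : EuclideanSpace ℝ (Fin n)) (t₀ : ℝ) (ht₀ : 0 < t₀)
    (hatH : EuclideanSpace ℝ (Fin n) → ℝ → ℝ)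
    (hhatH : ∀ y t, hatH y t
      = (4 * π * (t₀ - t)) ^ (-(n : ℝ) / 2)
          * Real.exp (-‖x₀ - y‖ ^ 2 / (4 * (t₀ - t))))
    (F D : ℝ → ℝ)
    (hF : ∀ t, F t = ∫ y, t ^ 2 * u y t
      * (lap (fun z => Real.log (u z t)) y + n / (2 * t)) * hatH y t)
    (hD : ∀ t, D t = 2 * t ^ 2 * ∫ y,
      (∑ i, ∑ j, (hess i j (fun z => Real.log (u z t)) y
          + (1 / (2 * t)) * (if i = j then 1 else 0)) ^ 2)
        * u y t * hatH y t) :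
    (∀ t ∈ Set.Ioo (0 : ℝ) t₀, HasDerivAt F (D t) t ∧ 0 ≤ D t)
    ∧ MonotoneOn F (Set.Ioo (0 : ℝ) t₀) := by
  set ν : EE n → ℝ := fun z => u₀ (x₀ + z) with hνdef
  have hν : Continuous ν := by fun_prop
  have hs : HasCompactSupport ν := hsupp.comp_homeomorph (Homeomorph.addLeft x₀)
  have hn' : ∀ z, 0 ≤ ν z := fun z => hnn _
  have hne' : ∃ z, ν z ≠ 0 := by
    obtain ⟨z, hz⟩ := hne
    exact ⟨z - x₀, by simpa [hνdef] using hz⟩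
  set C : ℝ := (16 * π ^ 2 * t₀) ^ (-(n : ℝ) / 2) with hC
  let r : ℝ → ℝ := fun t => Real.sqrt ((1 / t - 1 / t₀) / 4)
  have hpos : ∀ t ∈ Set.Ioo (0 : ℝ) t₀, 0 < (1 / t - 1 / t₀) / 4 := by
    intro t ht
    have := one_div_lt_one_div_of_lt ht.1 ht.2
    linarith
  have hr : ∀ t ∈ Set.Ioo (0 : ℝ) t₀, 0 < r t := fun t ht => Real.sqrt_pos.2 (hpos t ht)
  have hr2 : ∀ t ∈ Set.Ioo (0 : ℝ) t₀, r t ^ 2 = (1 / t - 1 / t₀) / 4 :=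
    fun t ht => Real.sq_sqrt (hpos t ht).le
  have hv : ∀ t ∈ Set.Ioo (0 : ℝ) t₀, ∀ y, u y t = (4 * π * t) ^ (-(n : ℝ) / 2) *
      Real.exp (-‖y - x₀‖ ^ 2 / (4 * t))
      * AA ν (fun _ => 1) ((1 / (2 * t)) • (y - x₀), 1 / (4 * t)) := fun t ht y => by
    rw [hu, u_formula u₀ x₀ y ht.1]
  have hh : ∀ t ∈ Set.Ioo (0 : ℝ) t₀, ∀ i j y,
      hess i j (fun z => Real.log (u z t)) y + (1 / (2 * t)) * (if i = j then 1 else 0)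
      = 1 / (4 * t ^ 2) * (gg ν (fun z => z i * z j) ((1 / (2 * t)) • (y - x₀), 1 / (4 * t))
        - gg ν (fun z => z i) ((1 / (2 * t)) • (y - x₀), 1 / (4 * t))
          * gg ν (fun z => z j) ((1 / (2 * t)) • (y - x₀), 1 / (4 * t))) := fun t ht i j y => by
    have h4 : 0 < 4 * π * t := by have := ht.1; positivity
    exact hess_log hν hs hn' hne' x₀ ht.1 (Real.rpow_pos_of_pos h4 _) (fun z => u z t)
      (hv t ht) i j y
  have n1 : ∀ j, Nice (gg ν (fun z => z j)) := fun j => gg_nice hν hs hn' hne' (by fun_prop)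
  have n2 : ∀ j k, Nice (gg ν (fun z => z j * z k)) := fun j k =>
    gg_nice hν hs hn' hne' (by fun_prop)
  let Φ : Fin n → ℝ → ℝ := fun i r => ∫ ξ : EE n, Real.exp (-‖ξ‖ ^ 2 / 4) *
      (AA ν (fun _ => 1) (r • ξ, 1 / (4 * t₀) + r ^ 2) *
        (gg ν (fun z => z i * z i) (r • ξ, 1 / (4 * t₀) + r ^ 2)
          - gg ν (fun z => z i) (r • ξ, 1 / (4 * t₀) + r ^ 2)
            * gg ν (fun z => z i) (r • ξ, 1 / (4 * t₀) + r ^ 2)))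
  let Θ : Fin n → ℝ → ℝ := fun i r => ∫ ξ : EE n, Real.exp (-‖ξ‖ ^ 2 / 4) *
      (AA ν (fun _ => 1) (r • ξ, 1 / (4 * t₀) + r ^ 2) *
        (-2 * ∑ j, (gg ν (fun z => z j * z i) (r • ξ, 1 / (4 * t₀) + r ^ 2)
          - gg ν (fun z => z j) (r • ξ, 1 / (4 * t₀) + r ^ 2)
            * gg ν (fun z => z i) (r • ξ, 1 / (4 * t₀) + r ^ 2)) ^ 2))
  have hΦ : ∀ i r, HasDerivAt (Φ i) (2 * r * Θ i r) r := fun i r =>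
    phi_deriv hν hs hn' hne' (1 / (4 * t₀)) r i
  have hFΦ : ∀ t ∈ Set.Ioo (0 : ℝ) t₀, F t = C / 4 * ∑ i, Φ i (r t) := by
    intro t ht
    have ht' := ht.1.ne'
    rw [hF]
    have e : ∀ y, t ^ 2 * u y t * (lap (fun z => Real.log (u z t)) y + n / (2 * t)) * hatH y t
        = (fun w => 1 / 4 * ∑ i, (gg ν (fun z => z i * z i) w
          - gg ν (fun z => z i) w * gg ν (fun z => z i) w))
            ((1 / (2 * t)) • (y - x₀), 1 / (4 * t)) * (u y t * hatH y t) := by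
      intro y
      have e1 : lap (fun z => Real.log (u z t)) y + n / (2 * t)
        = ∑ i, (hess i i (fun z => Real.log (u z t)) y + (1 / (2 * t)) * (if i = i then 1 else 0)) := by
        rw [Finset.sum_add_distrib, lap]
        simp
        ring
      rw [e1]
      rw [Finset.sum_congr rfl fun i _ => hh t ht i i y, ← Finset.mul_sum]
      field_simp
    have hd := dens u₀ x₀ ht.1 ht.2 (hr t ht) (hr2 t ht) (fun y => u y t) (fun y => hatH y t)
      (hv t ht) (fun y => hhatH y t) (fun w => 1 / 4 * ∑ i, (gg ν (fun z => z i * z i) w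
          - gg ν (fun z => z i) w * gg ν (fun z => z i) w))
    rw [integral_congr_ae (Eventually.of_forall e), hd, ← hC, div_mul_eq_mul_div, mul_div_assoc]
    congr 1
    simp only [Φ]
    rw [← integral_finsetSum _ fun i _ => nice_int1 hν hs hn' hne' (1 / (4 * t₀)) (r t)
      ((n2 i i).sub ((n1 i).mul (n1 i))), ← integral_div]
    congr 1
    funext ξ
    rw [← Finset.mul_sum, ← Finset.mul_sum]
    ring
  have hDΘ : ∀ t ∈ Set.Ioo (0 : ℝ) t₀, D t = C / (8 * t ^ 2) * ∑ i, (-1 / 2) * Θ i (r t) := by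
    intro t ht
    have ht' := ht.1.ne'
    rw [hD]
    have e : ∀ y, (∑ i, ∑ j, (hess i j (fun z => Real.log (u z t)) y
          + (1 / (2 * t)) * (if i = j then 1 else 0)) ^ 2) * u y t * hatH y t
        = (fun w => 1 / (16 * t ^ 4) * ∑ i, ∑ j, (gg ν (fun z => z j * z i) w
          - gg ν (fun z => z j) w * gg ν (fun z => z i) w) ^ 2)
            ((1 / (2 * t)) • (y - x₀), 1 / (4 * t)) * (u y t * hatH y t) := by
      intro y
      rw [Finset.sum_comm]
      simp only [hh t ht, mul_pow]
      simp only [← Finset.mul_sum]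
      rw [mul_assoc]
      congr 2
      field_simp
      norm_num
    have hd := dens u₀ x₀ ht.1 ht.2 (hr t ht) (hr2 t ht) (fun y => u y t) (fun y => hatH y t)
      (hv t ht) (fun y => hhatH y t) (fun w => 1 / (16 * t ^ 4) * ∑ i, ∑ j, (gg ν (fun z => z j * z i) w
          - gg ν (fun z => z j) w * gg ν (fun z => z i) w) ^ 2)
    rw [integral_congr_ae (Eventually.of_forall e), hd, ← hC]
    have e2 : (∑ i, (-1 / 2) * Θ i (r t)) = 16 * t ^ 4 * ∫ ξ : EE n, Real.exp (-‖ξ‖ ^ 2 / 4) *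
        (AA ν (fun _ => 1) (r t • ξ, 1 / (4 * t₀) + r t ^ 2) *
        (1 / (16 * t ^ 4) * ∑ i, ∑ j, (gg ν (fun z => z j * z i) (r t • ξ, 1 / (4 * t₀) + r t ^ 2)
          - gg ν (fun z => z j) (r t • ξ, 1 / (4 * t₀) + r t ^ 2)
            * gg ν (fun z => z i) (r t • ξ, 1 / (4 * t₀) + r t ^ 2)) ^ 2)) := by
      simp only [Θ]
      rw [← Finset.mul_sum, ← integral_finsetSum, ← integral_const_mul, ← integral_const_mul]
      · congr 1
        funext ξ
        rw [← Finset.mul_sum, ← Finset.mul_sum, ← Finset.mul_sum]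
        field_simp
      · intro i _
        refine nice_int1 hν hs hn' hne' (1 / (4 * t₀)) (r t) (P := fun w =>
          -2 * ∑ j, (gg ν (fun z => z j * z i) w - gg ν (fun z => z j) w * gg ν (fun z => z i) w) ^ 2) ?_
        simp only [pow_two]
        exact (Nice.const _).mul (Nice.sum _ fun j =>
          ((n2 j i).sub ((n1 j).mul (n1 i))).mul ((n2 j i).sub ((n1 j).mul (n1 i))))
    rw [e2]
    field_simp
    try ring
  have hder : ∀ t ∈ Set.Ioo (0 : ℝ) t₀, HasDerivAt F (D t) t := by
    intro t ht
    have ht' := ht.1.ne'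
    have hrt := (hr t ht).ne'
    have d1 : HasDerivAt (fun t : ℝ => (1 / t - 1 / t₀) / 4) (-(t ^ 2)⁻¹ / 4) t := by
      simp only [one_div]
      exact ((hasDerivAt_inv ht').sub_const _).div_const 4
    have d2 : HasDerivAt r (-(t ^ 2)⁻¹ / 4 / (2 * r t)) t := d1.sqrt (hpos t ht).ne'
    have d3 : HasDerivAt (fun t => C / 4 * ∑ i, Φ i (r t))
        (C / 4 * ∑ i, (2 * r t * Θ i (r t)) * (-(t ^ 2)⁻¹ / 4 / (2 * r t))) t :=
      (HasDerivAt.fun_sum fun i _ => (hΦ i (r t)).comp t d2).const_mul _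
    have ev : F =ᶠ[nhds t] fun t => C / 4 * ∑ i, Φ i (r t) := by
      filter_upwards [isOpen_Ioo.mem_nhds ht] with x hx using hFΦ x hx
    refine (d3.congr_of_eventuallyEq ev).congr_deriv ?_
    rw [hDΘ t ht, ← Finset.sum_mul, ← Finset.mul_sum, ← Finset.mul_sum]
    field_simp
    ring
  have hD0 : ∀ t ∈ Set.Ioo (0 : ℝ) t₀, 0 ≤ D t := by
    intro t ht
    rw [hD]
    refine mul_nonneg (by positivity) (integral_nonneg fun y => ?_)
    have h1 : 0 ≤ u y t := by
      rw [hv t ht]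
      have := (AA_pos hν hs hn' hne' ((1 / (2 * t)) • (y - x₀), 1 / (4 * t))).le
      have := ht.1
      positivity
    have h2 : 0 ≤ hatH y t := by
      rw [hhatH]
      have : 0 < t₀ - t := by linarith [ht.2]
      positivity
    exact mul_nonneg (mul_nonneg (Finset.sum_nonneg fun i _ => Finset.sum_nonneg fun j _ =>
      sq_nonneg _) h1) h2
  refine ⟨fun t ht => ⟨hder t ht, hD0 t ht⟩, ?_⟩
  refine monotoneOn_of_deriv_nonneg (convex_Ioo 0 t₀)
    (fun t ht => (hder t ht).continuousAt.continuousWithinAt) ?_ ?_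
  · rw [interior_Ioo]
    exact fun t ht => (hder t ht).differentiableAt.differentiableWithinAt
  · rw [interior_Ioo]
    intro t ht
    rw [(hder t ht).deriv]
    exact hD0 t ht
end
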